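/- Suppose the function 𝑝̃ has a unique maximizer m₀ on [0,1], that m₀ satisfies the fixed-point equation m₀ = g(τ(m₀)), and that 𝑝̃''(m₀) < 0. Then λ := −1/𝑝̃''(m₀) − 1/(2J) > 0, and there exists a constant K (independent of N) such that for all N ≥ 1, sup_{z∈ℝ} |ℙ((|𝓜(D)| − N·m₀)/N^{1/2} ≤ z) − ℙ(X ≤ z)| ≤ K/N^{1/2}, where D is drawn from the IMD Gibbs measure and X is a centered Gaussian random variable with variance λ. -/

import Mathlib

open Real Finset MeasureTheory

noncomputable section

/-- Dimer configurations (matchings of the complete graph on `Fin N`), encoded as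
involutions of `Fin N`: fixed points are monomers, 2-cycles are dimers. -/
abbrev Dimer (N : ℕ) := {f : Fin N → Fin N // ∀ i, f (f i) = i}

/-- The set of monomers (dimer-free vertices) of a dimer configuration. -/
def monomers {N : ℕ} (D : Dimer N) : Finset (Fin N) :=
  Finset.univ.filter fun i => D.1 i = i

/-- Monomer density `m(D) = |𝓜(D)|/N`. -/
def mDim {N : ℕ} (D : Dimer N) : ℝ := ((monomers D).card : ℝ) / N

/-- The parameter `b = (log N)/2 + h - J`. -/
def bIMD (N : ℕ) (J h : ℝ) : ℝ := Real.log N / 2 + h - J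

/-- The Gibbs weight `exp(-H(D)) = exp(N (a m(D)^2 + b m(D)))` with `a = J`. -/
def wDim (N : ℕ) (J h : ℝ) (D : Dimer N) : ℝ :=
  Real.exp (N * (J * mDim D ^ 2 + bIMD N J h * mDim D))

/-- The probability of an event `A` under the IMD Gibbs measure. -/
def probDim (N : ℕ) (J h : ℝ) (A : Dimer N → Prop) : ℝ :=
  (∑ D : Dimer N, Set.indicator {D | A D} (wDim N J h) D) / ∑ D : Dimer N, wDim N J h D

/-- The conditional probability `ℙ(A | B)` under the IMD Gibbs measure. -/
def condProbDim (N : ℕ) (J h : ℝ) (A B : Dimer N → Prop) : ℝ :=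
  (∑ D : Dimer N, Set.indicator {D | A D ∧ B D} (wDim N J h) D) /
    ∑ D : Dimer N, Set.indicator {D | B D} (wDim N J h) D

/-- `g(x) = (√(e^{4x} + 4 e^{2x}) - e^{2x})/2`. -/
def gFun (x : ℝ) : ℝ := (Real.sqrt (Real.exp (4*x) + 4 * Real.exp (2*x)) - Real.exp (2*x)) / 2

/-- `τ(x) = (2x-1)J + h`. -/
def tauFun (J h x : ℝ) : ℝ := (2*x - 1) * J + h

/-- `𝑝̃(m) = -J m² - (1 - g(τ(m)) + log(1 - g(τ(m))))/2`. -/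
def ptilde (J h m : ℝ) : ℝ :=
  -J * m^2 - (1 - gFun (tauFun J h m) + Real.log (1 - gFun (tauFun J h m))) / 2

/-- The CDF of a centered Gaussian with variance `v`, evaluated at `z`. -/
def gaussCDF (v : ℝ) (z : ℝ) : ℝ :=
  (ProbabilityTheory.gaussianReal 0 (Real.toNNReal v) (Set.Iic z)).toReal

/-- Spin configurations `Σ = {0,1}^N`. -/
abbrev Config (N : ℕ) := Fin N → Bool

/-- `𝓐(σ) = {i : σ_i = 1}`. -/
def ASet {N : ℕ} (σ : Config N) : Finset (Fin N) := Finset.univ.filter fun i => σ i = true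

/-- `M(σ) = ∑ σ_i`. -/
def Msum {N : ℕ} (σ : Config N) : ℕ := (ASet σ).card

/-- Magnetization `m(σ) = M(σ)/N`. -/
def mConf {N : ℕ} (σ : Config N) : ℝ := (Msum σ : ℝ) / N

/-- `D(σ)`: the number of dimer configurations `D` with `𝓜(D) = 𝓐(σ)`. -/
def Dcount (N : ℕ) (σ : Config N) : ℕ :=
  (Finset.univ.filter fun D : Dimer N => monomers D = ASet σ).card

/-- The weight `D(σ) exp(-H(σ))` of the weighted Curie–Weiss model. -/
def wConf (N : ℕ) (J h : ℝ) (σ : Config N) : ℝ :=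
  (Dcount N σ : ℝ) * Real.exp (N * (J * mConf σ ^ 2 + bIMD N J h * mConf σ))

/-- The probability of an event `A` under the weighted Curie–Weiss Gibbs measure. -/
def probConf (N : ℕ) (J h : ℝ) (A : Config N → Prop) : ℝ :=
  (∑ σ : Config N, Set.indicator {σ | A σ} (wConf N J h) σ) / ∑ σ : Config N, wConf N J h σ

/-- Expectation under the weighted Curie–Weiss Gibbs measure. -/
def EConf (N : ℕ) (J h : ℝ) (f : Config N → ℝ) : ℝ :=
  (∑ σ : Config N, wConf N J h σ * f σ) / ∑ σ : Config N, wConf N J h σ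

/-- `L₁(m) = 2(1-m)(m² - (1-m)e^{2τ(m)})/((1-m) + e^{2τ(m)})`. -/
def Lone (J h m : ℝ) : ℝ :=
  2*(1-m)*(m^2 - (1-m)*Real.exp (2 * tauFun J h m)) / ((1-m) + Real.exp (2 * tauFun J h m))

/-- `L₂(m) = 4(1-m)(m² + (1-m)e^{2τ(m)})/((1-m) + e^{2τ(m)})`. -/
def Ltwo (J h m : ℝ) : ℝ :=
  4*(1-m)*(m^2 + (1-m)*Real.exp (2 * tauFun J h m)) / ((1-m) + Real.exp (2 * tauFun J h m))

/-- The configuration obtained from `σ` by setting the spins at `u, v` to `s, t`. -/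
def upd {N : ℕ} (σ : Config N) (u v : Fin N) (s t : Bool) : Config N :=
  fun i => if i = u then s else if i = v then t else σ i

/-- The edges of the complete graph, enumerated as ordered pairs `u < v`. -/
def cEdges (N : ℕ) : Finset (Fin N × Fin N) := Finset.univ.filter fun p => p.1 < p.2

/-- The probability of resampling the pair of spins at `(u,v)` to `(s,t)`:
the conditional distribution of `(σ_u, σ_v)` given `(σ_i)_{i ≠ u,v}`. -/
def qCond (N : ℕ) (J h : ℝ) (σ : Config N) (u v : Fin N) (s t : Bool) : ℝ :=
  wConf N J h (upd σ u v s t) / ∑ st : Bool × Bool, wConf N J h (upd σ u v st.1 st.2)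

/-- `E[F(σ, σ') | σ]` for the exchangeable pair `(σ, σ')` obtained by resampling the
spins at a uniformly chosen edge. -/
def condE2 (N : ℕ) (J h : ℝ) (F : Config N → Config N → ℝ) (σ : Config N) : ℝ :=
  ((cEdges N).card : ℝ)⁻¹ * ∑ p ∈ cEdges N, ∑ st : Bool × Bool,
    qCond N J h σ p.1 p.2 st.1 st.2 * F σ (upd σ p.1 p.2 st.1 st.2)

/-- The weight of the Gibbs measure conditioned on the event `S`. -/
def wCond (N : ℕ) (J h : ℝ) (S : Config N → Prop) (σ : Config N) : ℝ :=
  Set.indicator {σ | S σ} (wConf N J h) σ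

/-- `ℙ_ℓ(A) = ℙ(A | S)`, probability under the conditioned Gibbs measure. -/
def probL (N : ℕ) (J h : ℝ) (S A : Config N → Prop) : ℝ :=
  (∑ σ : Config N, Set.indicator {σ | A σ} (wCond N J h S) σ) / ∑ σ : Config N, wCond N J h S σ

/-- Expectation under the conditioned Gibbs measure `ℙ(·|S)`. -/
def EL (N : ℕ) (J h : ℝ) (S : Config N → Prop) (f : Config N → ℝ) : ℝ :=
  (∑ σ : Config N, wCond N J h S σ * f σ) / ∑ σ : Config N, wCond N J h S σ

/-- Resampling probability for the conditioned measure `ℙ(·|S)`. -/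
def qCondL (N : ℕ) (J h : ℝ) (S : Config N → Prop) (σ : Config N) (u v : Fin N)
    (s t : Bool) : ℝ :=
  wCond N J h S (upd σ u v s t) / ∑ st : Bool × Bool, wCond N J h S (upd σ u v st.1 st.2)

/-- `E_ℓ[F(σ, σ') | σ]` for the exchangeable pair under the conditioned measure. -/
def condE2L (N : ℕ) (J h : ℝ) (S : Config N → Prop) (F : Config N → Config N → ℝ)
    (σ : Config N) : ℝ :=
  ((cEdges N).card : ℝ)⁻¹ * ∑ p ∈ cEdges N, ∑ st : Bool × Bool,
    qCondL N J h S σ p.1 p.2 st.1 st.2 * F σ (upd σ p.1 p.2 st.1 st.2)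

/-- The maximizer set `O` of `𝑝̃` on `[0,1]`. -/
def maxSet (J h : ℝ) : Set ℝ :=
  {x | x ∈ Set.Icc (0:ℝ) 1 ∧ ∀ y ∈ Set.Icc (0:ℝ) 1, ptilde J h y ≤ ptilde J h x}

end

/-- Robbins' form of Stirling's formula: the error in `log n!` lies between `0` and `1/(12n)`. -/
lemma log_factorial_stirling_bounds {n : ℕ} (hn : n ≠ 0) :
    0 ≤ Real.log n.factorial - (n * Real.log n - n + Real.log (2 * π * n) / 2) ∧
    Real.log n.factorial - (n * Real.log n - n + Real.log (2 * π * n) / 2) ≤ 1 / (12 * n) := by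
  have hn0 : (0:ℝ) < n := by positivity
  have key : Real.log n.factorial - (n * Real.log n - n + Real.log (2 * π * n) / 2)
      = Real.log (Stirling.stirlingSeq n) - Real.log (√π) := by
    rw [Stirling.log_stirlingSeq_formula, Real.log_sqrt pi_pos.le,
      Real.log_div hn0.ne' (exp_pos 1).ne', Real.log_exp,
      show 2 * π * (n:ℝ) = π * (2 * n) by ring, Real.log_mul pi_pos.ne' (by positivity)]
    ring
  have hsp : 0 < √π := Real.sqrt_pos.mpr pi_pos
  rw [key]
  refine ⟨sub_nonneg.mpr (Real.log_le_log hsp (Stirling.sqrt_pi_le_stirlingSeq hn)), ?_⟩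
  have hmono : Monotone fun k : ℕ =>
      Real.log (Stirling.stirlingSeq (n + k)) - 1 / (12 * ((n + k : ℕ) : ℝ)) := by
    refine monotone_nat_of_le_succ fun k => ?_
    have h1 := Stirling.log_stirlingSeq_sdiff_le (n + k)
    have hk : (0:ℝ) < ((n + k : ℕ) : ℝ) := by exact_mod_cast (by omega : 0 < n + k)
    have h2 : 1 / (12 * ((n + k : ℕ) : ℝ) * (((n + k : ℕ) : ℝ) + 1))
        = 1 / (12 * ((n + k : ℕ) : ℝ)) - 1 / (12 * ((n + (k + 1) : ℕ) : ℝ)) := by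
      rw [show ((n + (k + 1) : ℕ) : ℝ) = ((n + k : ℕ) : ℝ) + 1 by push_cast; ring]
      field_simp
      ring
    rw [h2] at h1
    have h3 : n + (k + 1) = n + k + 1 := rfl
    rw [h3] at h1 ⊢
    linarith
  have hlim : Filter.Tendsto (fun k : ℕ =>
      Real.log (Stirling.stirlingSeq (n + k)) - 1 / (12 * ((n + k : ℕ) : ℝ)))
      Filter.atTop (nhds (Real.log (√π) - 0)) := by
    have hshift : Filter.Tendsto (fun k : ℕ => n + k) Filter.atTop Filter.atTop :=
      Filter.tendsto_atTop_mono (fun k => Nat.le_add_left k n) Filter.tendsto_id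
    refine Filter.Tendsto.sub ?_ ?_
    · exact (Stirling.tendsto_stirlingSeq_sqrt_pi.comp hshift).log hsp.ne'
    · have : Filter.Tendsto (fun m : ℕ => 1 / (12 * (m : ℝ))) Filter.atTop (nhds 0) := by
        have := (tendsto_const_div_atTop_nhds_zero_nat (1 / 12 : ℝ))
        refine this.congr fun m => ?_
        rw [div_div]
      exact this.comp hshift
  have := hmono.ge_of_tendsto hlim 0
  simp only [add_zero, sub_zero] at this
  linarith

/-- The monomers of an involutive permutation are the points outside its support. -/
lemma card_monomers_mk {N : ℕ} (σ : Equiv.Perm (Fin N)) (hσ : ∀ i, σ (σ i) = i) :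
    (monomers (⟨σ, hσ⟩ : Dimer N)).card = N - σ.cycleType.sum := by
  have h := Finset.card_compl σ.support
  rw [Fintype.card_fin] at h
  rw [Equiv.Perm.sum_cycleType, ← h]
  congr 1
  ext i
  simp [monomers]

lemma involutive_iff_cycleType {N : ℕ} (σ : Equiv.Perm (Fin N)) :
    (∀ i, σ (σ i) = i) ↔ σ.cycleType = Multiset.replicate (Multiset.card σ.cycleType) 2 := by
  rw [Multiset.eq_replicate_card, ← Equiv.Perm.pow_prime_eq_one_iff (p := 2), Equiv.Perm.ext_iff]
  simp [sq]

/-- A dimer configuration as a permutation. -/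
def dimerPerm {N : ℕ} (D : Dimer N) : Equiv.Perm (Fin N) := ⟨D.1, D.1, D.2, D.2⟩

/-- The monomers are the vertices outside the `j` dimers, `j` being the number of 2-cycles. -/
lemma card_monomers_add {N : ℕ} (D : Dimer N) :
    (monomers D).card + 2 * Multiset.card (dimerPerm D).cycleType = N := by
  have hD : ∀ i, dimerPerm D (dimerPerm D i) = i := D.2
  have h1 : (monomers D).card = _ := card_monomers_mk (dimerPerm D) hD
  have h2 := (dimerPerm D).sum_cycleType_le
  rw [Fintype.card_fin] at h2
  have hrep := (involutive_iff_cycleType _).mp hD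
  rw [hrep, Multiset.sum_replicate, smul_eq_mul] at h1 h2
  omega

/-- The number of matchings of the complete graph on `N` vertices with `j` edges. -/
lemma card_dimer_card_monomers (N j : ℕ) (hj : 2 * j ≤ N) :
    ((univ.filter fun D : Dimer N => (monomers D).card = N - 2 * j).card : ℝ)
      = N.factorial / ((N - 2 * j).factorial * 2 ^ j * j.factorial) := by
  have hc : (univ.filter fun D : Dimer N => (monomers D).card = N - 2 * j).card
      = (univ.filter fun σ : Equiv.Perm (Fin N) =>
          σ.cycleType = Multiset.replicate j 2).card := by
    refine Finset.card_bij (fun D _ => dimerPerm D) ?_ ?_ ?_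
    · intro D hD
      simp only [mem_filter, mem_univ, true_and] at hD ⊢
      have h1 := card_monomers_add D
      have hrep := (involutive_iff_cycleType (dimerPerm D)).mp D.2
      rw [hrep]
      congr 1
      omega
    · intro D₁ _ D₂ _ h
      exact Subtype.ext (congrArg (fun σ : Equiv.Perm (Fin N) => (σ : Fin N → Fin N)) h)
    · intro σ hσ
      simp only [mem_filter, mem_univ, true_and] at hσ ⊢
      have hinv : ∀ i, σ (σ i) = i := by
        rw [involutive_iff_cycleType, hσ, Multiset.card_replicate]
      refine ⟨⟨σ, hinv⟩, ?_, Equiv.ext fun i => rfl⟩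
      rw [card_monomers_mk σ hinv, hσ, Multiset.sum_replicate, smul_eq_mul, mul_comm]
  have hprod : ∏ n ∈ (Multiset.replicate j 2).toFinset, ((Multiset.replicate j 2).count n).factorial
      = j.factorial := by
    rcases Nat.eq_zero_or_pos j with rfl | hj0
    · simp
    · rw [Multiset.toFinset_replicate, if_neg hj0.ne']
      simp
  have hmul := Equiv.Perm.card_of_cycleType_mul_eq (α := Fin N) (Multiset.replicate j 2)
  rw [if_pos, hprod, Multiset.sum_replicate, Multiset.prod_replicate, Fintype.card_fin,
    smul_eq_mul, mul_comm j 2] at hmul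
  · rw [hc, eq_div_iff (by positivity)]
    exact_mod_cast hmul
  · refine ⟨by simpa [mul_comm] using hj, fun a ha => (Multiset.eq_of_mem_replicate ha).ge⟩

/-- Summation over dimer configurations according to the number of dimers. -/
lemma sum_dimer_eq (N : ℕ) (f : ℕ → ℝ) :
    ∑ D : Dimer N, f (monomers D).card = ∑ j ∈ range (N / 2 + 1),
      N.factorial / ((N - 2 * j).factorial * 2 ^ j * j.factorial) * f (N - 2 * j) := by
  have hmem : ∀ D ∈ (univ : Finset (Dimer N)),
      Multiset.card (dimerPerm D).cycleType ∈ range (N / 2 + 1) := fun D _ => by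
    have := card_monomers_add D
    exact mem_range.mpr (by omega)
  rw [← Finset.sum_fiberwise_of_maps_to hmem]
  refine Finset.sum_congr rfl fun j hj => ?_
  have hj' := mem_range.mp hj
  rw [← card_dimer_card_monomers N j (by omega), ← nsmul_eq_mul, ← Finset.sum_const]
  have hiff : ∀ D : Dimer N,
      Multiset.card (dimerPerm D).cycleType = j ↔ (monomers D).card = N - 2 * j := fun D => by
    have := card_monomers_add D
    omega
  simp only [hiff]
  exact Finset.sum_congr rfl fun D hD => by rw [(mem_filter.mp hD).2]

/-- Moving the centre of a Gaussian by at most `2` costs a constant and half of the exponent. -/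
lemma exp_neg_mul_sq_le_of_abs_sub_le {c x t : ℝ} (hc : 0 < c) (h : |x - t| ≤ 2) :
    Real.exp (-c * t ^ 2) ≤ Real.exp (4 * c) * Real.exp (-(c / 2) * x ^ 2) := by
  rw [← Real.exp_add]
  refine Real.exp_le_exp.mpr ?_
  have h1 : (x - t) ^ 2 ≤ 4 := by
    have := sq_le_sq' (abs_le.mp h).1 (abs_le.mp h).2
    linarith
  nlinarith [mul_nonneg hc.le (sq_nonneg (x - 2 * t)), mul_le_mul_of_nonneg_left h1 hc.le]

/-- The exponential is Lipschitz below any bound of its values. -/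
lemma abs_exp_sub_exp_le {u v M : ℝ} (hu : Real.exp u ≤ M) (hv : Real.exp v ≤ M) :
    |Real.exp u - Real.exp v| ≤ M * |u - v| := by
  wlog huv : v ≤ u generalizing u v
  · rw [abs_sub_comm, abs_sub_comm u v]
    exact this hv hu (le_of_not_ge huv)
  rw [abs_of_nonneg (sub_nonneg.mpr (Real.exp_le_exp.mpr huv)), abs_of_nonneg (sub_nonneg.mpr huv)]
  have h1 : Real.exp v = Real.exp u * Real.exp (v - u) := by
    rw [← Real.exp_add]
    congr 1
    ring
  have h2 := Real.add_one_le_exp (v - u)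
  have h3 := Real.exp_pos u
  rw [h1]
  nlinarith [mul_le_mul_of_nonneg_left h2 h3.le,
    mul_le_mul_of_nonneg_right hu (sub_nonneg.mpr huv)]

lemma add_sq_le_exp {b x K : ℝ} (hb : 0 < b) (hK : 0 ≤ K) :
    K + x ^ 2 ≤ (K + 1 / b) * Real.exp (b * x ^ 2) := by
  have h1 := Real.add_one_le_exp (b * x ^ 2)
  have h2 : 0 ≤ b * x ^ 2 := by positivity
  have h3 : K * 1 ≤ K * Real.exp (b * x ^ 2) :=
    mul_le_mul_of_nonneg_left (by linarith) hK
  have h4 : 1 / b * (b * x ^ 2) ≤ 1 / b * Real.exp (b * x ^ 2) :=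
    mul_le_mul_of_nonneg_left (by linarith) (by positivity)
  have h5 : 1 / b * (b * x ^ 2) = x ^ 2 := by field_simp
  linarith

/-- Lipschitz bound for a Gaussian, with Gaussian decay. -/
lemma abs_gaussian_sub_le {a x t : ℝ} (ha : 0 < a) (h : |x - t| ≤ 2) :
    |Real.exp (-a * t ^ 2) - Real.exp (-a * x ^ 2)|
      ≤ Real.exp (4 * a) * a * (3 + 4 / a) * |x - t| * Real.exp (-(a / 4) * x ^ 2) := by
  have h1 := exp_neg_mul_sq_le_of_abs_sub_le ha h
  have h2 : Real.exp (-a * x ^ 2) ≤ Real.exp (4 * a) * Real.exp (-(a / 2) * x ^ 2) :=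
    exp_neg_mul_sq_le_of_abs_sub_le ha (by simp)
  refine (abs_exp_sub_exp_le h1 h2).trans ?_
  have h3 : |-a * t ^ 2 - -a * x ^ 2| ≤ a * |x - t| * (3 + x ^ 2) := by
    rw [show -a * t ^ 2 - -a * x ^ 2 = a * ((x - t) * (x + t)) by ring, abs_mul, abs_mul,
      abs_of_pos ha, mul_assoc]
    have : |x + t| ≤ 3 + x ^ 2 := by
      have h4 : |x + t| ≤ |2 * x| + |x - t| := by
        rw [show x + t = 2 * x - (x - t) by ring]
        exact abs_sub _ _
      rw [abs_mul, abs_two] at h4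
      nlinarith [sq_abs x, sq_nonneg (|x| - 1)]
    gcongr
  have h4 := add_sq_le_exp (b := a / 4) (x := x) (K := 3) (by positivity) (by norm_num)
  have h5 : Real.exp (-(a / 2) * x ^ 2) * Real.exp (a / 4 * x ^ 2)
      = Real.exp (-(a / 4) * x ^ 2) := by
    rw [← Real.exp_add]
    congr 1
    ring
  rw [show 1 / (a / 4) = 4 / a by field_simp] at h4
  calc Real.exp (4 * a) * Real.exp (-(a / 2) * x ^ 2) * |-a * t ^ 2 - -a * x ^ 2|
      ≤ Real.exp (4 * a) * Real.exp (-(a / 2) * x ^ 2)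
        * (a * |x - t| * ((3 + 4 / a) * Real.exp (a / 4 * x ^ 2))) := by
        gcongr
        exact h3.trans (by gcongr)
    _ = Real.exp (4 * a) * a * (3 + 4 / a) * |x - t|
        * (Real.exp (-(a / 2) * x ^ 2) * Real.exp (a / 4 * x ^ 2)) := by ring
    _ = _ := by rw [h5]

/-- Gaussian mass at distance at least `r` from the origin is `O(1/r)`. -/
lemma exists_gaussian_tail_le {a : ℝ} (ha : 0 < a) :
    ∃ C : ℝ, 0 ≤ C ∧ ∀ r : ℝ, 0 < r → ∀ s : Set ℝ, MeasurableSet s → (∀ x ∈ s, r ≤ |x|) →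
      ∫ x in s, Real.exp (-a * x ^ 2) ≤ C / r := by
  refine ⟨(1 + 1 / (a / 2)) * √(π / (a / 2)), by positivity, fun r hr s hs hsr => ?_⟩
  have hi := integrable_exp_neg_mul_sq ha
  have hi2 := (integrable_exp_neg_mul_sq (half_pos ha)).const_mul ((1 + 1 / (a / 2)) / r)
  calc ∫ x in s, Real.exp (-a * x ^ 2)
      ≤ ∫ x in s, (1 + 1 / (a / 2)) / r * Real.exp (-(a / 2) * x ^ 2) := by
        refine setIntegral_mono_on hi.integrableOn hi2.integrableOn hs fun x hx => ?_
        have h1 : r ≤ 1 + x ^ 2 := by nlinarith [hsr x hx, sq_abs x, sq_nonneg (|x| - 1)]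
        have h2 := add_sq_le_exp (b := a / 2) (x := x) (K := 1) (by positivity) (by norm_num)
        have h3 : Real.exp (a / 2 * x ^ 2) * Real.exp (-a * x ^ 2)
            = Real.exp (-(a / 2) * x ^ 2) := by
          rw [← Real.exp_add]
          congr 1
          ring
        rw [div_mul_eq_mul_div, le_div_iff₀ hr, ← h3]
        nlinarith [mul_le_mul_of_nonneg_right (h1.trans h2) (Real.exp_pos (-a * x ^ 2)).le]
    _ ≤ ∫ x, (1 + 1 / (a / 2)) / r * Real.exp (-(a / 2) * x ^ 2) :=
        setIntegral_le_integral hi2 (Filter.Eventually.of_forall fun x => by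
          simp only [Pi.zero_apply]; positivity)
    _ = _ := by
        rw [integral_const_mul, integral_gaussian]
        ring

/-- A step function that is pointwise close to a Gaussian has integrals close to those
of the Gaussian. -/
lemma abs_sum_sub_intervalIntegral_le {f ψ : ℝ → ℝ} (hf : Continuous f) (hψ : Integrable ψ)
    (hψc : Continuous ψ) (hψ0 : ∀ x, 0 ≤ ψ x) {δ : ℝ} (hδ : 0 < δ) (t₀ : ℝ) (w : ℕ → ℝ) (m : ℕ)
    (hw : ∀ j < m, ∀ x ∈ Set.Icc (t₀ + j * δ) (t₀ + (j + 1) * δ), |w j - f x| ≤ ψ x) :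
    |δ * ∑ j ∈ range m, w j - ∫ x in t₀..(t₀ + m * δ), f x| ≤ ∫ x, ψ x := by
  have hadj : ∀ g : ℝ → ℝ, Continuous g → ∫ x in t₀..(t₀ + m * δ), g x
      = ∑ j ∈ range m, ∫ x in (t₀ + j * δ)..(t₀ + (j + 1) * δ), g x := by
    intro g hg
    have := intervalIntegral.sum_integral_adjacent_intervals (f := g) (μ := volume)
      (a := fun j : ℕ => t₀ + j * δ) (n := m) (fun k _ => hg.intervalIntegrable _ _)
    simpa using this.symm
  have hstep : ∀ j ∈ range m, |δ * w j - ∫ x in (t₀ + j * δ)..(t₀ + (j + 1) * δ), f x|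
      ≤ ∫ x in (t₀ + j * δ)..(t₀ + (j + 1) * δ), ψ x := by
    intro j hj
    have hle : t₀ + j * δ ≤ t₀ + (j + 1) * δ := by nlinarith
    have h1 : δ * w j - ∫ x in (t₀ + j * δ)..(t₀ + (j + 1) * δ), f x
        = ∫ x in (t₀ + j * δ)..(t₀ + (j + 1) * δ), (w j - f x) := by
      rw [intervalIntegral.integral_sub (by simp) (hf.intervalIntegrable _ _),
        intervalIntegral.integral_const, smul_eq_mul]
      ring
    rw [h1]
    refine (intervalIntegral.abs_integral_le_integral_abs hle).trans ?_
    exact intervalIntegral.integral_mono_on hle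
      ((continuous_const.sub hf).abs.intervalIntegrable _ _) (hψc.intervalIntegrable _ _)
      (hw j (mem_range.mp hj))
  rw [hadj f hf, mul_sum, ← sum_sub_distrib]
  calc _ ≤ ∑ j ∈ range m, |δ * w j - ∫ x in (t₀ + j * δ)..(t₀ + (j + 1) * δ), f x| :=
        abs_sum_le_sum_abs _ _
    _ ≤ ∑ j ∈ range m, ∫ x in (t₀ + j * δ)..(t₀ + (j + 1) * δ), ψ x := sum_le_sum hstep
    _ = ∫ x in t₀..(t₀ + m * δ), ψ x := (hadj ψ hψc).symm
    _ ≤ ∫ x, ψ x := by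
        rw [intervalIntegral.integral_of_le (by nlinarith [(Nat.cast_nonneg m : (0:ℝ) ≤ m)])]
        exact setIntegral_le_integral hψ (Filter.Eventually.of_forall hψ0)

/-- The Gaussian distribution function at the grid point closest to `y` from above is within
`O(δ)` of its value at `y`, once the grid `t₀ + jδ`, `j ≤ n + 1`, covers `[-η/δ, η/δ]`. -/
lemma exists_abs_gaussian_grid_sub_le {a η : ℝ} (ha : 0 < a) (hη : 0 < η) :
    ∃ C : ℝ, 0 ≤ C ∧ ∀ δ : ℝ, 0 < δ → ∀ (t₀ : ℝ) (n : ℕ), t₀ ≤ -(η / δ) →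
      η / δ ≤ t₀ + (n + 1) * δ → ∀ y : ℝ,
      |(∫ x in t₀..(t₀ + (min (n + 1) ⌈(y - t₀) / δ⌉₊ : ℕ) * δ), Real.exp (-a * x ^ 2))
        - ∫ x in Set.Iic y, Real.exp (-a * x ^ 2)| ≤ C * δ := by
  obtain ⟨C, hC0, hC⟩ := exists_gaussian_tail_le ha
  refine ⟨2 * (C / η) + 1, by positivity, fun δ hδ t₀ n ht₀ htn y => ?_⟩
  have hi := integrable_exp_neg_mul_sq ha
  have hr : 0 < η / δ := by positivity
  have hCr : C / (η / δ) = C / η * δ := by field_simp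
  have hnn : ∀ s : Set ℝ, 0 ≤ ∫ x in s, Real.exp (-a * x ^ 2) := fun s =>
    integral_nonneg fun x => (Real.exp_pos _).le
  have hCη : 0 ≤ C / η := by positivity
  have hlow : ∀ t, t ≤ t₀ → ∫ x in Set.Iic t, Real.exp (-a * x ^ 2) ≤ C / η * δ := fun t ht => by
    rw [← hCr]
    refine hC _ hr _ measurableSet_Iic fun x hx => ?_
    rw [le_abs]
    right
    have : x ≤ t := hx
    linarith
  rw [← intervalIntegral.integral_Iic_sub_Iic hi.integrableOn hi.integrableOn]
  set J := min (n + 1) ⌈(y - t₀) / δ⌉₊ with hJ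
  have h0 := hlow t₀ le_rfl
  rcases le_or_gt y t₀ with hy | hy
  · have hJ0 : J = 0 := by
      rw [hJ, Nat.ceil_eq_zero.mpr (div_nonpos_of_nonpos_of_nonneg (by linarith) hδ.le)]
      simp
    have := hlow y hy
    rw [hJ0, abs_le]
    have := hnn (Set.Iic y)
    simp only [Nat.cast_zero, zero_mul, add_zero, sub_self]
    constructor <;> nlinarith
  rcases le_or_gt y (t₀ + (n + 1) * δ) with hy2 | hy2
  · have hJc : J = ⌈(y - t₀) / δ⌉₊ := by
      refine min_eq_right (Nat.ceil_le.mpr ?_)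
      rw [div_le_iff₀ hδ]
      push_cast
      linarith
    have h1 : (y - t₀) / δ ≤ J := hJc ▸ Nat.le_ceil _
    have h2 : (J : ℝ) < (y - t₀) / δ + 1 :=
      hJc ▸ Nat.ceil_lt_add_one (div_nonneg (by linarith) hδ.le)
    rw [div_le_iff₀ hδ] at h1
    rw [← sub_lt_iff_lt_add, lt_div_iff₀ hδ] at h2
    have hle : y ≤ t₀ + J * δ := by linarith
    have h3 : (∫ x in Set.Iic (t₀ + J * δ), Real.exp (-a * x ^ 2))
        - ∫ x in Set.Iic y, Real.exp (-a * x ^ 2) = ∫ x in y..(t₀ + J * δ), Real.exp (-a * x ^ 2) :=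
      intervalIntegral.integral_Iic_sub_Iic hi.integrableOn hi.integrableOn
    have h4 : |∫ x in y..(t₀ + J * δ), Real.exp (-a * x ^ 2)| ≤ 1 * |t₀ + J * δ - y| := by
      rw [← Real.norm_eq_abs]
      refine intervalIntegral.norm_integral_le_of_norm_le_const fun x _ => ?_
      rw [Real.norm_eq_abs, abs_of_pos (Real.exp_pos _), Real.exp_le_one_iff]
      nlinarith [sq_nonneg x]
    rw [abs_of_nonneg (by linarith : 0 ≤ t₀ + J * δ - y)] at h4
    have h5 := hnn (Set.Iic t₀)
    rw [abs_le] at h4 ⊢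
    constructor <;> nlinarith
  · have hJc : J = n + 1 := by
      refine min_eq_left ?_
      have h1 := Nat.le_ceil ((y - t₀) / δ)
      rw [div_le_iff₀ hδ] at h1
      have h2 : ((n + 1 : ℕ) : ℝ) * δ < ⌈(y - t₀) / δ⌉₊ * δ := by
        push_cast
        linarith
      exact_mod_cast (lt_of_mul_lt_mul_right h2 hδ.le).le
    have h3 : (∫ x in Set.Iic y, Real.exp (-a * x ^ 2))
        - ∫ x in Set.Iic (t₀ + J * δ), Real.exp (-a * x ^ 2)
        = ∫ x in Set.Ioc (t₀ + J * δ) y, Real.exp (-a * x ^ 2) := by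
      rw [intervalIntegral.integral_Iic_sub_Iic hi.integrableOn hi.integrableOn,
        intervalIntegral.integral_of_le]
      rw [hJc]
      push_cast
      exact hy2.le
    have h4 : ∫ x in Set.Ioc (t₀ + J * δ) y, Real.exp (-a * x ^ 2) ≤ C / η * δ := by
      rw [← hCr]
      refine hC _ hr _ measurableSet_Ioc fun x hx => ?_
      rw [le_abs]
      left
      have := hx.1
      rw [hJc] at this
      push_cast at this
      linarith
    have h5 := hnn (Set.Iic t₀)
    have h6 := hnn (Set.Ioc (t₀ + J * δ) y)
    rw [abs_le]
    constructor <;> nlinarith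

/-- Riemann sums for a Gaussian: if the weights `w j` are close to the values of the Gaussian on
the grid `t₀ + jδ`, then the distribution functions are close, uniformly. -/
lemma exists_abs_sum_sub_integral_gaussian_le {a c η : ℝ} (ha : 0 < a) (hc : 0 < c) (hη : 0 < η) :
    ∃ C : ℝ, 0 ≤ C ∧ ∀ δ : ℝ, 0 < δ → δ ≤ 2 → ∀ E : ℝ, 0 ≤ E → ∀ (t₀ : ℝ) (n : ℕ) (w : ℕ → ℝ),
      t₀ ≤ -(η / δ) → η / δ ≤ t₀ + (n + 1) * δ →
      (∀ j ≤ n, |w j - Real.exp (-a * (t₀ + j * δ) ^ 2)|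
        ≤ E * Real.exp (-c * (t₀ + j * δ) ^ 2)) → ∀ y : ℝ,
      |δ * ∑ j ∈ (range (n + 1)).filter (fun j : ℕ => t₀ + j * δ < y), w j
        - ∫ x in Set.Iic y, Real.exp (-a * x ^ 2)| ≤ C * (E + δ) := by
  obtain ⟨C, hC0, hC⟩ := exists_abs_gaussian_grid_sub_le ha hη
  set d := min (c / 2) (a / 4) with hd
  have hd0 : 0 < d := lt_min (by positivity) (by positivity)
  set B := Real.exp (4 * a) * a * (3 + 4 / a) with hB
  have hB0 : 0 ≤ B := by positivity
  refine ⟨(Real.exp (4 * c) + B) * √(π / d) + C, by positivity,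
    fun δ hδ hδ2 E hE t₀ n w ht₀ htn hw y => ?_⟩
  set J := min (n + 1) ⌈(y - t₀) / δ⌉₊ with hJ
  have hfil : (range (n + 1)).filter (fun j : ℕ => t₀ + j * δ < y) = range J := by
    ext j
    rw [mem_filter, mem_range, mem_range, hJ, lt_min_iff, Nat.lt_ceil, lt_div_iff₀ hδ,
      lt_sub_iff_add_lt']
  have hψ := (integrable_exp_neg_mul_sq hd0).const_mul (E * Real.exp (4 * c) + B * δ)
  have h1 := abs_sum_sub_intervalIntegral_le (f := fun x => Real.exp (-a * x ^ 2))
    (by fun_prop) hψ (by fun_prop) (fun x => by positivity) hδ t₀ w J ?_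
  · rw [integral_const_mul, integral_gaussian] at h1
    have h2 := hC δ hδ t₀ n ht₀ htn y
    rw [hfil]
    have h3 := abs_sub_le (δ * ∑ j ∈ range J, w j)
      (∫ x in t₀..(t₀ + J * δ), Real.exp (-a * x ^ 2)) (∫ x in Set.Iic y, Real.exp (-a * x ^ 2))
    have h4 : 0 ≤ √(π / d) := Real.sqrt_nonneg _
    have h5 : (E * Real.exp (4 * c) + B * δ) * √(π / d)
        ≤ (Real.exp (4 * c) + B) * √(π / d) * (E + δ) := by
      have : 0 ≤ (E * B + δ * Real.exp (4 * c)) * √(π / d) := by positivity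
      nlinarith
    nlinarith
  · intro j hj x hx
    have hjn : j ≤ n := Nat.lt_succ_iff.mp (hj.trans_le (min_le_left _ _))
    have hxt : |x - (t₀ + j * δ)| ≤ δ := by
      rw [abs_le]
      constructor <;> linarith [hx.1, hx.2]
    have hxt2 := hxt.trans hδ2
    have e1 := hw j hjn
    have e2 := exp_neg_mul_sq_le_of_abs_sub_le hc hxt2
    have e3 := abs_gaussian_sub_le ha hxt2
    have e4 : Real.exp (-(c / 2) * x ^ 2) ≤ Real.exp (-d * x ^ 2) := by
      gcongr
      exact min_le_left _ _
    have e5 : Real.exp (-(a / 4) * x ^ 2) ≤ Real.exp (-d * x ^ 2) := by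
      gcongr
      exact min_le_right _ _
    refine (abs_sub_le _ (Real.exp (-a * (t₀ + j * δ) ^ 2)) _).trans ?_
    rw [add_mul]
    refine add_le_add (e1.trans ?_) (e3.trans ?_)
    · rw [mul_assoc]
      gcongr
      exact e2.trans (by gcongr)
    · gcongr

lemma gFun_sqrt (x : ℝ) :
    Real.sqrt (Real.exp (4 * x) + 4 * Real.exp (2 * x)) = 2 * gFun x + Real.exp (2 * x) := by
  rw [gFun]
  ring

lemma gFun_sq (x : ℝ) : gFun x ^ 2 = Real.exp (2 * x) * (1 - gFun x) := by
  have h1 := Real.sq_sqrt (by positivity : 0 ≤ Real.exp (4 * x) + 4 * Real.exp (2 * x))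
  have h2 : Real.exp (4 * x) = Real.exp (2 * x) ^ 2 := by
    rw [← Real.exp_nat_mul]
    congr 1
    push_cast
    ring
  rw [gFun_sqrt, h2] at h1
  nlinarith

lemma gFun_pos (x : ℝ) : 0 < gFun x := by
  have h2 : Real.exp (4 * x) = Real.exp (2 * x) ^ 2 := by
    rw [← Real.exp_nat_mul]
    congr 1
    push_cast
    ring
  have h := Real.exp_pos (2 * x)
  have : Real.exp (2 * x) < Real.sqrt (Real.exp (4 * x) + 4 * Real.exp (2 * x)) := by
    rw [Real.lt_sqrt h.le, h2]
    linarith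
  rw [gFun]
  linarith

lemma gFun_lt_one (x : ℝ) : gFun x < 1 := by
  have h1 := gFun_sq x
  have h2 := Real.exp_pos (2 * x)
  have h3 := gFun_pos x
  by_contra hcon
  push Not at hcon
  nlinarith [mul_nonneg h2.le (sub_nonneg.mpr hcon), sq_nonneg (gFun x)]

lemma eq_log_gFun (x : ℝ) : x = Real.log (gFun x) - Real.log (1 - gFun x) / 2 := by
  have h := congrArg Real.log (gFun_sq x)
  rw [Real.log_pow, Real.log_mul (Real.exp_pos _).ne' (sub_pos.mpr (gFun_lt_one x)).ne',
    Real.log_exp] at h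
  push_cast at h
  linarith

lemma hasDerivAt_gFun (x : ℝ) :
    HasDerivAt gFun (2 * gFun x * (1 - gFun x) / (2 - gFun x)) x := by
  have hg0 := gFun_pos x
  have hg1 := gFun_lt_one x
  have hu := Real.exp_pos (2 * x)
  have hsq := gFun_sq x
  have e4 : HasDerivAt (fun y : ℝ => Real.exp (4 * y)) (Real.exp (4 * x) * 4) x := by
    simpa using ((hasDerivAt_id x).const_mul 4).exp
  have e2 : HasDerivAt (fun y : ℝ => Real.exp (2 * y)) (Real.exp (2 * x) * 2) x := by
    simpa using ((hasDerivAt_id x).const_mul 2).exp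
  have hd := (((e4.add (e2.const_mul 4)).sqrt
    (by simp only [Pi.add_apply]; positivity)).sub e2).div_const 2
  have h2 : Real.exp (4 * x) = Real.exp (2 * x) ^ 2 := by
    rw [← Real.exp_nat_mul]
    congr 1
    push_cast
    ring
  refine hd.congr_deriv ?_
  simp only [Pi.add_apply]
  rw [gFun_sqrt, h2]
  have hu' : Real.exp (2 * x) = gFun x ^ 2 / (1 - gFun x) := by
    rw [eq_div_iff (by linarith)]
    linarith
  rw [hu']
  have n1 : (1 - gFun x) ≠ 0 := by linarith
  have n2 : (2 - gFun x) ≠ 0 := by linarith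
  have n3 : 2 * gFun x + gFun x ^ 2 / (1 - gFun x) ≠ 0 := by
    have : 0 < 1 - gFun x := by linarith
    positivity
  have n4 : 2 * gFun x + gFun x ^ 2 / (1 - gFun x) = gFun x * (2 - gFun x) / (1 - gFun x) := by
    field_simp
    ring
  rw [n4]
  field_simp
  ring

lemma hasDerivAt_tauFun (J h m : ℝ) : HasDerivAt (tauFun J h) (2 * J) m := by
  have := ((((hasDerivAt_id m).const_mul 2).sub_const 1).mul_const J).add_const h
  exact this.congr_deriv (by ring)

lemma hasDerivAt_ptilde (J h m : ℝ) :
    HasDerivAt (ptilde J h) (2 * J * (gFun (tauFun J h m) - m)) m := by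
  have hg0 := gFun_pos (tauFun J h m)
  have hg1 := gFun_lt_one (tauFun J h m)
  have hgτ := (hasDerivAt_gFun (tauFun J h m)).comp m (hasDerivAt_tauFun J h m)
  have h1 := hgτ.const_sub 1
  have h2 := h1.log (by simp only [Function.comp_apply]; linarith)
  have h3 := ((hasDerivAt_id m).pow 2).const_mul (-J)
  have h4 := h3.sub ((h1.add h2).div_const 2)
  refine h4.congr_deriv ?_
  simp only [Function.comp_apply, id]
  have n1 : (1 - gFun (tauFun J h m)) ≠ 0 := by linarith
  have n2 : (2 - gFun (tauFun J h m)) ≠ 0 := by linarith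
  field_simp
  ring

lemma iteratedDeriv_two_ptilde (J h m : ℝ) :
    iteratedDeriv 2 (ptilde J h) m = -(2 * J) + 4 * J ^ 2 *
      (2 * gFun (tauFun J h m) * (1 - gFun (tauFun J h m)) / (2 - gFun (tauFun J h m))) := by
  have hgτ := (hasDerivAt_gFun (tauFun J h m)).comp m (hasDerivAt_tauFun J h m)
  rw [iteratedDeriv_succ, iteratedDeriv_one,
    show deriv (ptilde J h) = fun m => 2 * J * (gFun (tauFun J h m) - m) from
      funext fun m => (hasDerivAt_ptilde J h m).deriv]
  refine ((hgτ.sub (hasDerivAt_id m)).const_mul (2 * J)).deriv.trans ?_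
  ring

/-- The rate function of the monomer density: `exp (N * rateFun m)` is the exponential order of
the weight of the configurations with monomer density `m`. -/
noncomputable def rateFun (J h m : ℝ) : ℝ :=
  J * m ^ 2 + (h - J) * m - m * Real.log m - (1 - m) / 2 * Real.log (1 - m) - (1 - m) / 2

/-- Gibbs' inequality in the form `a - b ≤ a log a - a log b`. -/
lemma sub_le_mul_log_sub {a b : ℝ} (ha : 0 ≤ a) (hb : 0 < b) :
    a - b ≤ a * Real.log a - a * Real.log b := by
  rcases ha.eq_or_lt with rfl | ha
  · simp [hb.le]
  · have h := Real.log_le_sub_one_of_pos (div_pos hb ha)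
    rw [Real.log_div hb.ne' ha.ne'] at h
    have h2 := mul_le_mul_of_nonneg_left h ha.le
    have h3 : a * (b / a - 1) = b - a := by field_simp
    linarith

lemma rateFun_le_ptilde (J h : ℝ) {m : ℝ} (hm : m ∈ Set.Icc (0:ℝ) 1) :
    rateFun J h m ≤ ptilde J h m := by
  have hx := eq_log_gFun (tauFun J h m)
  have hg0 := gFun_pos (tauFun J h m)
  have hg1 := gFun_lt_one (tauFun J h m)
  have h1 := sub_le_mul_log_sub hm.1 hg0
  have h2 := sub_le_mul_log_sub (sub_nonneg.mpr hm.2) (sub_pos.mpr hg1)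
  have h3 : rateFun J h m = -J * m ^ 2 + m * tauFun J h m - m * Real.log m
      - (1 - m) / 2 * Real.log (1 - m) - (1 - m) / 2 := by
    rw [rateFun, tauFun]
    ring
  rw [h3, ptilde]
  generalize gFun (tauFun J h m) = g at *
  rw [hx]
  nlinarith

lemma rateFun_eq_ptilde {J h m : ℝ} (hm : m = gFun (tauFun J h m)) :
    rateFun J h m = ptilde J h m := by
  have hx := eq_log_gFun (tauFun J h m)
  have h3 : rateFun J h m = -J * m ^ 2 + m * tauFun J h m - m * Real.log m
      - (1 - m) / 2 * Real.log (1 - m) - (1 - m) / 2 := by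
    rw [rateFun, tauFun]
    ring
  rw [h3, ptilde]
  rw [← hm] at hx ⊢
  rw [hx]
  ring

lemma continuous_rateFun (J h : ℝ) : Continuous (rateFun J h) := by
  have h1 : Continuous fun m : ℝ => m * Real.log m := Real.continuous_mul_log
  have h2 : Continuous fun m : ℝ => (1 - m) * Real.log (1 - m) :=
    Real.continuous_mul_log.comp (continuous_const.sub continuous_id)
  have h3 : rateFun J h = fun m => J * m ^ 2 + (h - J) * m - m * Real.log m
      - (1 - m) * Real.log (1 - m) / 2 - (1 - m) / 2 := by
    ext m
    rw [rateFun]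
    ring
  rw [h3]
  fun_prop

lemma hasDerivAt_rateFun (J h : ℝ) {m : ℝ} (h0 : 0 < m) (h1 : m < 1) :
    HasDerivAt (rateFun J h) (tauFun J h m - Real.log m + Real.log (1 - m) / 2) m := by
  have e1 := (hasDerivAt_id m).const_sub 1
  have e2 := ((hasDerivAt_id m).mul ((hasDerivAt_id m).log h0.ne'))
  have e3 := (e1.div_const 2).mul (e1.log (by simp only [id]; linarith))
  have e4 := ((((((hasDerivAt_id m).pow 2).const_mul J).add
    ((hasDerivAt_id m).const_mul (h - J))).sub e2).sub e3).sub (e1.div_const 2)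
  refine e4.congr_deriv ?_
  simp only [id, tauFun]
  have n1 : 1 - m ≠ 0 := by linarith
  field_simp
  ring

lemma hasDerivAt_deriv_rateFun (J h : ℝ) {m : ℝ} (h0 : 0 < m) (h1 : m < 1) :
    HasDerivAt (fun m => tauFun J h m - Real.log m + Real.log (1 - m) / 2)
      (2 * J - 1 / m - 1 / (2 * (1 - m))) m := by
  have e1 := (hasDerivAt_id m).const_sub 1
  have e4 := ((hasDerivAt_tauFun J h m).sub ((hasDerivAt_id m).log h0.ne')).add
    ((e1.log (by simp only [id]; linarith)).div_const 2)
  refine e4.congr_deriv ?_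
  simp only [id]
  have n1 : 1 - m ≠ 0 := by linarith
  field_simp
  ring

/-- Integration of a bound `|f'| ≤ C |x - a|ᵏ` from the point `a`. -/
lemma abs_sub_le_of_deriv_le_pow {f f' : ℝ → ℝ} {a ε C : ℝ} {k : ℕ} (hC : 0 ≤ C)
    (hf : ∀ x, |x - a| ≤ ε → HasDerivAt f (f' x) x)
    (hf' : ∀ x, |x - a| ≤ ε → |f' x| ≤ C * |x - a| ^ k) {x : ℝ} (hx : |x - a| ≤ ε) :
    |f x - f a| ≤ C * |x - a| ^ (k + 1) := by
  have hs : Convex ℝ (Metric.closedBall a |x - a|) := convex_closedBall a _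
  have := hs.norm_image_sub_le_of_norm_hasDerivWithin_le (f := f) (f' := f')
    (C := C * |x - a| ^ k) (x := a) (y := x)
    (fun y hy => (hf y ?_).hasDerivWithinAt) (fun y hy => ?_) (by simp) (by simp [Real.dist_eq])
  · simpa only [Real.norm_eq_abs, pow_succ, mul_assoc] using this
  · rw [Metric.mem_closedBall, Real.dist_eq] at hy
    exact hy.trans hx
  · rw [Metric.mem_closedBall, Real.dist_eq] at hy
    refine (hf' y (hy.trans hx)).trans ?_
    gcongr

/-- Second-order expansion of the rate function at a stationary point. -/
lemma abs_rateFun_sub_le {J h m₀ ε : ℝ} (hε : 0 < ε) (hε0 : 2 * ε ≤ m₀) (hε1 : 2 * ε ≤ 1 - m₀)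
    (hfix : m₀ = gFun (tauFun J h m₀)) {m : ℝ} (hm : |m - m₀| ≤ ε) :
    |rateFun J h m - rateFun J h m₀ + (1 / m₀ + 1 / (2 * (1 - m₀)) - 2 * J) * (m - m₀) ^ 2 / 2|
      ≤ 1 / ε ^ 2 * |m - m₀| ^ 3 := by
  set q := 1 / m₀ + 1 / (2 * (1 - m₀)) - 2 * J with hq
  have hmem : ∀ x, |x - m₀| ≤ ε → ε ≤ x ∧ ε ≤ 1 - x := fun x hx => by
    have := abs_le.mp hx
    constructor <;> linarith
  have hstat : tauFun J h m₀ - Real.log m₀ + Real.log (1 - m₀) / 2 = 0 := by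
    have := eq_log_gFun (tauFun J h m₀)
    rw [← hfix] at this
    linarith
  have hsecond : ∀ x, |x - m₀| ≤ ε →
      |2 * J - 1 / x - 1 / (2 * (1 - x)) + q| ≤ 1 / ε ^ 2 * |x - m₀| ^ 1 := by
    intro x hx
    obtain ⟨hx0, hx1⟩ := hmem x hx
    have p0 : 0 < x := by linarith
    have p1 : 0 < 1 - x := by linarith
    have p2 : 0 < m₀ := by linarith
    have p3 : 0 < 1 - m₀ := by linarith
    have e1 : 2 * J - 1 / x - 1 / (2 * (1 - x)) + q
        = (x - m₀) * (1 / (x * m₀) - 1 / (2 * ((1 - x) * (1 - m₀)))) := by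
      rw [hq]
      field_simp
      ring
    have i1 : 0 ≤ 1 / (x * m₀) := by positivity
    have i2 : 0 ≤ 1 / (2 * ((1 - x) * (1 - m₀))) := by positivity
    have i3 : 1 / (x * m₀) ≤ 1 / ε ^ 2 := by
      apply one_div_le_one_div_of_le (by positivity)
      nlinarith
    have i4 : 1 / (2 * ((1 - x) * (1 - m₀))) ≤ 1 / ε ^ 2 := by
      apply one_div_le_one_div_of_le (by positivity)
      nlinarith
    rw [e1, abs_mul, pow_one, mul_comm]
    gcongr
    rw [abs_le]
    constructor <;> linarith
  have hfirst : ∀ x, |x - m₀| ≤ ε →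
      |tauFun J h x - Real.log x + Real.log (1 - x) / 2 + q * (x - m₀)|
        ≤ 1 / ε ^ 2 * |x - m₀| ^ 2 := by
    intro x hx
    have := abs_sub_le_of_deriv_le_pow (k := 1) (ε := ε) (a := m₀) (C := 1 / ε ^ 2)
      (f := fun x => tauFun J h x - Real.log x + Real.log (1 - x) / 2 + q * (x - m₀))
      (f' := fun x => 2 * J - 1 / x - 1 / (2 * (1 - x)) + q) (by positivity) (fun y hy => ?_)
      hsecond hx
    · simpa [hstat] using this
    · obtain ⟨hy0, hy1⟩ := hmem y hy
      have := (hasDerivAt_deriv_rateFun J h (m := y) (by linarith) (by linarith)).add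
        (((hasDerivAt_id y).sub_const m₀).const_mul q)
      exact this.congr_deriv (by ring)
  have := abs_sub_le_of_deriv_le_pow (k := 2) (ε := ε) (a := m₀) (C := 1 / ε ^ 2)
    (f := fun x => rateFun J h x + q * (x - m₀) ^ 2 / 2)
    (f' := fun x => tauFun J h x - Real.log x + Real.log (1 - x) / 2 + q * (x - m₀))
    (by positivity) (fun y hy => ?_) hfirst hm
  · refine le_trans (le_of_eq ?_) this
    congr 1
    ring
  · obtain ⟨hy0, hy1⟩ := hmem y hy
    have := (hasDerivAt_rateFun J h (m := y) (by linarith) (by linarith)).add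
      (((((hasDerivAt_id y).sub_const m₀).pow 2).const_mul q).div_const 2)
    refine this.congr_deriv ?_
    simp only [id]
    ring

/-- Quadratic decay of the rate function away from its unique maximizer. -/
lemma exists_rateFun_le {J h m₀ : ℝ}
    (hmax : ∀ m ∈ Set.Icc (0:ℝ) 1, ptilde J h m ≤ ptilde J h m₀)
    (huniq : ∀ m ∈ Set.Icc (0:ℝ) 1, ptilde J h m = ptilde J h m₀ → m = m₀)
    (hfix : m₀ = gFun (tauFun J h m₀)) (hq : 0 < 1 / m₀ + 1 / (2 * (1 - m₀)) - 2 * J) :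
    ∃ c : ℝ, 0 < c ∧ ∀ m ∈ Set.Icc (0:ℝ) 1,
      rateFun J h m ≤ rateFun J h m₀ - c * (m - m₀) ^ 2 := by
  set q := 1 / m₀ + 1 / (2 * (1 - m₀)) - 2 * J with hqdef
  have hm0 : 0 < m₀ := hfix ▸ gFun_pos _
  have hm1 : m₀ < 1 := by
    have := gFun_lt_one (tauFun J h m₀)
    rwa [← hfix] at this
  set ε := min (m₀ / 2) ((1 - m₀) / 2) with hεdef
  have hε : 0 < ε := lt_min (by linarith) (by linarith)
  have hε0 : 2 * ε ≤ m₀ := by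
    have := min_le_left (m₀ / 2) ((1 - m₀) / 2)
    linarith
  have hε1 : 2 * ε ≤ 1 - m₀ := by
    have := min_le_right (m₀ / 2) ((1 - m₀) / 2)
    linarith
  set ρ := min ε (q * ε ^ 2 / 4) with hρdef
  have hρ : 0 < ρ := lt_min hε (by positivity)
  have hlocal : ∀ m, |m - m₀| ≤ ρ →
      rateFun J h m ≤ rateFun J h m₀ - q / 4 * (m - m₀) ^ 2 := by
    intro m hm
    have h1 := (abs_le.mp (abs_rateFun_sub_le hε hε0 hε1 hfix (hm.trans (min_le_left _ _)))).2
    rw [← hqdef] at h1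
    have h2 : 1 / ε ^ 2 * |m - m₀| ^ 3 ≤ q / 4 * (m - m₀) ^ 2 := by
      have h3 : 1 / ε ^ 2 * |m - m₀| ≤ q / 4 := by
        have := hm.trans (min_le_right _ _)
        rw [one_div, inv_mul_le_iff₀ (by positivity)]
        linarith
      rw [show 1 / ε ^ 2 * |m - m₀| ^ 3 = 1 / ε ^ 2 * |m - m₀| * |m - m₀| ^ 2 by ring, sq_abs]
      gcongr
    linarith
  have hK : IsCompact (Set.Icc (0:ℝ) 1 ∩ {m | ρ ≤ |m - m₀|}) := by
    refine isCompact_Icc.inter_right (isClosed_le continuous_const ?_)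
    fun_prop
  rcases (Set.Icc (0:ℝ) 1 ∩ {m | ρ ≤ |m - m₀|}).eq_empty_or_nonempty with hemp | hne
  · refine ⟨q / 4, by positivity, fun m hm => hlocal m ?_⟩
    by_contra hcon
    exact (hemp ▸ (⟨hm, (not_le.mp hcon).le⟩ : m ∈ Set.Icc (0:ℝ) 1 ∩ {m | ρ ≤ |m - m₀|}) :
      m ∈ (∅ : Set ℝ))
  · obtain ⟨m', hm', hmax'⟩ := hK.exists_isMaxOn hne (continuous_rateFun J h).continuousOn
    have hgap : rateFun J h m' < rateFun J h m₀ := by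
      rw [rateFun_eq_ptilde hfix]
      refine (rateFun_le_ptilde J h hm'.1).trans_lt (lt_of_le_of_ne (hmax m' hm'.1) fun heq => ?_)
      have h1 : ρ ≤ |m' - m₀| := hm'.2
      rw [huniq m' hm'.1 heq, sub_self, abs_zero] at h1
      linarith
    refine ⟨min (q / 4) (rateFun J h m₀ - rateFun J h m'),
      lt_min (by positivity) (by linarith), fun m hm => ?_⟩
    rcases le_or_gt |m - m₀| ρ with hmρ | hmρ
    · refine (hlocal m hmρ).trans ?_
      have := mul_le_mul_of_nonneg_right
        (min_le_left (q / 4) (rateFun J h m₀ - rateFun J h m')) (sq_nonneg (m - m₀))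
      linarith
    · have h1 : rateFun J h m ≤ rateFun J h m' := hmax' ⟨hm, hmρ.le⟩
      have h2 : (m - m₀) ^ 2 ≤ 1 := by
        have := hm.1
        have := hm.2
        nlinarith
      have h3 := mul_le_mul (min_le_right (q / 4) (rateFun J h m₀ - rateFun J h m')) h2
        (sq_nonneg (m - m₀)) (by linarith)
      linarith

/-- The curvature of the rate function and the second derivative of `ptilde` at a common
stationary point determine the same variance. -/
lemma variance_eq {J h m₀ : ℝ} (hJ : 0 < J) (hfix : m₀ = gFun (tauFun J h m₀))
    (hconc : iteratedDeriv 2 (ptilde J h) m₀ < 0) :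
    0 < 1 / m₀ + 1 / (2 * (1 - m₀)) - 2 * J ∧
    -(iteratedDeriv 2 (ptilde J h) m₀)⁻¹ - (2 * J)⁻¹
      = (1 / m₀ + 1 / (2 * (1 - m₀)) - 2 * J)⁻¹ := by
  have hm0 : 0 < m₀ := hfix ▸ gFun_pos _
  have hm1 : m₀ < 1 := by
    have := gFun_lt_one (tauFun J h m₀)
    rwa [← hfix] at this
  rw [iteratedDeriv_two_ptilde, ← hfix] at *
  have p1 : 0 < 1 - m₀ := by linarith
  have p2 : 0 < 2 - m₀ := by linarith
  set v := 2 * m₀ * (1 - m₀) / (2 - m₀) with hv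
  have hv0 : 0 < v := by positivity
  have hvinv : 1 / m₀ + 1 / (2 * (1 - m₀)) = 1 / v := by
    rw [hv]
    field_simp
    ring
  rw [hvinv]
  have hJv : 2 * J * v < 1 := by
    by_contra hcon
    push Not at hcon
    nlinarith [mul_le_mul_of_nonneg_left hcon hJ.le]
  have hq : 1 / v - 2 * J = (1 - 2 * J * v) / v := by field_simp
  have p3 : 0 < 1 - 2 * J * v := by linarith
  rw [hq]
  refine ⟨by positivity, ?_⟩
  rw [show -(2 * J) + 4 * J ^ 2 * v = -(2 * J * (1 - 2 * J * v)) by ring]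
  field_simp
  ring

/-- The total Gibbs weight of the configurations with `j` dimers. -/
noncomputable def dimerWeight (N : ℕ) (J h : ℝ) (j : ℕ) : ℝ :=
  N.factorial / ((N - 2 * j).factorial * 2 ^ j * j.factorial) *
    Real.exp (N * (J * (((N - 2 * j : ℕ) : ℝ) / N) ^ 2
      + bIMD N J h * (((N - 2 * j : ℕ) : ℝ) / N)))

lemma dimerWeight_pos (N : ℕ) (J h : ℝ) (j : ℕ) : 0 < dimerWeight N J h j := by
  unfold dimerWeight
  positivity

/-- The part of `log n!` beyond `n log n - n`. -/
noncomputable def stirlingRem (n : ℕ) : ℝ := Real.log n.factorial - (n * Real.log n - n)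

lemma stirlingRem_bounds {n : ℕ} (hn : n ≠ 0) :
    Real.log (2 * π * n) / 2 ≤ stirlingRem n ∧
    stirlingRem n ≤ Real.log (2 * π * n) / 2 + 1 / (12 * n) := by
  have := log_factorial_stirling_bounds hn
  unfold stirlingRem
  constructor <;> linarith

lemma stirlingRem_nonneg (n : ℕ) : 0 ≤ stirlingRem n := by
  rcases Nat.eq_zero_or_pos n with rfl | hn
  · simp [stirlingRem]
  · refine le_trans ?_ (stirlingRem_bounds hn.ne').1
    have h1 : (1:ℝ) ≤ n := by exact_mod_cast hn
    have := Real.log_nonneg (x := 2 * π * n) (by nlinarith [pi_gt_three])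
    linarith

/-- The weight in terms of the rate function and Stirling remainders. -/
lemma log_dimerWeight {N j : ℕ} (J h : ℝ) {m : ℝ} (hN : 1 ≤ N) (hj : 2 * j ≤ N)
    (hm : N * m = (N - 2 * j : ℕ)) :
    Real.log (dimerWeight N J h j) = N / 2 * Real.log N + N * rateFun J h m
      + (stirlingRem N - stirlingRem (N - 2 * j) - stirlingRem j) := by
  have hN0 : (0:ℝ) < N := by exact_mod_cast hN
  have hk : ((N - 2 * j : ℕ) : ℝ) = N - 2 * j := by
    push_cast [Nat.cast_sub hj]
    ring
  have hm' : ((N - 2 * j : ℕ) : ℝ) / N = m := by rw [← hm]; field_simp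
  have hj2 : 2 * (j:ℝ) = N * (1 - m) := by rw [hk] at hm; linarith
  have hlogk : ((N - 2 * j : ℕ) : ℝ) * Real.log (N - 2 * j : ℕ)
      = N * m * (Real.log N + Real.log m) := by
    rw [← hm]
    rcases eq_or_ne m 0 with rfl | hm0
    · simp
    · rw [Real.log_mul hN0.ne' hm0]
  have hlogj : (j:ℝ) * (Real.log j + Real.log 2)
      = N * (1 - m) / 2 * (Real.log N + Real.log (1 - m)) := by
    rcases Nat.eq_zero_or_pos j with rfl | hj0
    · have : 1 - m = 0 := by
        have : (N:ℝ) * (1 - m) = 0 := by rw [← hj2]; simp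
        exact (mul_eq_zero.mp this).resolve_left hN0.ne'
      rw [this]
      simp
    · have hj0' : (0:ℝ) < j := by exact_mod_cast hj0
      have h1m : 1 - m ≠ 0 := by
        intro h0
        rw [h0] at hj2
        linarith
      rw [← Real.log_mul hj0'.ne' two_ne_zero, mul_comm (j:ℝ) 2, hj2,
        Real.log_mul hN0.ne' h1m]
      rw [← hj2]
      ring
  have hf : ∀ n : ℕ, (n.factorial : ℝ) ≠ 0 := fun n => by positivity
  rw [dimerWeight, Real.log_mul (by positivity) (Real.exp_pos _).ne', Real.log_exp,
    Real.log_div (hf _) (by positivity), Real.log_mul (by positivity) (hf _),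
    Real.log_mul (hf _) (by positivity), Real.log_pow, hm', bIMD]
  simp only [stirlingRem, rateFun]
  rw [hlogk, ← hm]
  linear_combination -hlogj + (1 / 2 : ℝ) * hj2

/-- The logarithm of the normalization that turns the weights into Gaussian values. -/
noncomputable def logNorm (N : ℕ) (J h m₀ : ℝ) : ℝ :=
  N / 2 * Real.log N + N * rateFun J h m₀ + (Real.log (2 * π * N) / 2
    - Real.log (2 * π * (N * m₀)) / 2 - Real.log (2 * π * (N * (1 - m₀) / 2)) / 2)

/-- Crude upper bound for the weights. -/
lemma log_dimerWeight_le {N j : ℕ} (J h : ℝ) {m m₀ : ℝ} (hN : 1 ≤ N) (hj : 2 * j ≤ N)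
    (hm : N * m = (N - 2 * j : ℕ)) (h0 : 0 < m₀) (h1 : m₀ < 1) :
    Real.log (dimerWeight N J h j) - logNorm N J h m₀
      ≤ N * (rateFun J h m - rateFun J h m₀) + Real.log N + (1 + Real.log (2 * π)) := by
  have hN0 : (0:ℝ) < N := by exact_mod_cast hN
  have hN1 : (1:ℝ) ≤ N := by exact_mod_cast hN
  have e1 := (stirlingRem_bounds (n := N) (by omega)).2
  have e2 := stirlingRem_nonneg (N - 2 * j)
  have e3 := stirlingRem_nonneg j
  have e4 : 1 / (12 * (N:ℝ)) ≤ 1 := by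
    rw [div_le_one (by positivity)]
    linarith
  have e5 : Real.log (2 * π * (N * m₀)) ≤ Real.log (2 * π) + Real.log N := by
    rw [← Real.log_mul (by positivity) hN0.ne']
    refine Real.log_le_log (by positivity) ?_
    nlinarith [mul_pos (mul_pos two_pos pi_pos) hN0]
  have e6 : Real.log (2 * π * (N * (1 - m₀) / 2)) ≤ Real.log (2 * π) + Real.log N := by
    rw [← Real.log_mul (by positivity) hN0.ne']
    have : 0 < 1 - m₀ := by linarith
    refine Real.log_le_log (by positivity) ?_
    nlinarith [mul_pos (mul_pos two_pos pi_pos) hN0]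
  rw [log_dimerWeight J h hN hj hm, logNorm]
  linarith

/-- The logarithm is Lipschitz away from zero. -/
lemma abs_log_sub_log_le {x y ε : ℝ} (hε : 0 < ε) (hx : ε ≤ x) (hy : ε ≤ y) :
    |Real.log x - Real.log y| ≤ 1 / ε * |x - y| := by
  have key : ∀ a b : ℝ, ε ≤ a → ε ≤ b → Real.log a - Real.log b ≤ 1 / ε * |a - b| := by
    intro a b ha hb
    have ha0 := hε.trans_le ha
    have hb0 := hε.trans_le hb
    rw [← Real.log_div ha0.ne' hb0.ne']
    refine (Real.log_le_sub_one_of_pos (by positivity)).trans ?_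
    rw [show a / b - 1 = 1 / b * (a - b) by field_simp]
    calc 1 / b * (a - b) ≤ 1 / b * |a - b| := by gcongr; exact le_abs_self _
      _ ≤ _ := by gcongr
  rw [abs_le]
  have h1 := key x y hx hy
  have h2 := key y x hy hx
  rw [abs_sub_comm] at h2
  constructor <;> linarith

/-- Precise asymptotics of the weights in the bulk. -/
lemma abs_log_dimerWeight_sub_le {N j : ℕ} (J h : ℝ) {m m₀ ε : ℝ} (hN : 1 ≤ N) (hj : 2 * j ≤ N)
    (hm : N * m = (N - 2 * j : ℕ)) (hε : 0 < ε) (hε0 : 2 * ε ≤ m₀) (hε1 : 2 * ε ≤ 1 - m₀)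
    (hmε : |m - m₀| ≤ ε) :
    |Real.log (dimerWeight N J h j) - logNorm N J h m₀ - N * (rateFun J h m - rateFun J h m₀)|
      ≤ 1 / ε * |m - m₀| + 1 / ε / N := by
  have hN0 : (0:ℝ) < N := by exact_mod_cast hN
  obtain ⟨hl, hr⟩ := abs_le.mp hmε
  have hm0 : ε ≤ m := by linarith
  have hm1 : ε ≤ 1 - m := by linarith
  have p0 : 0 < m := by linarith
  have p1 : 0 < 1 - m := by linarith
  have p2 : 0 < m₀ := by linarith
  have p3 : 0 < 1 - m₀ := by linarith
  have hk : ((N - 2 * j : ℕ) : ℝ) = N - 2 * j := by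
    push_cast [Nat.cast_sub hj]
    ring
  have hj2 : (j:ℝ) = N * (1 - m) / 2 := by rw [hk] at hm; linarith
  have hk0 : N - 2 * j ≠ 0 := by
    intro h0
    rw [h0, Nat.cast_zero] at hm
    exact (mul_pos hN0 p0).ne' hm
  have hj0 : j ≠ 0 := by
    rintro rfl
    have := mul_pos hN0 p1
    simp only [Nat.cast_zero] at hj2
    linarith
  obtain ⟨a1, a2⟩ := stirlingRem_bounds (n := N) (by omega)
  obtain ⟨b1, b2⟩ := stirlingRem_bounds hk0
  obtain ⟨c1, c2⟩ := stirlingRem_bounds hj0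
  rw [← hm] at b1 b2
  rw [hj2] at c1 c2
  have hpi := pi_pos
  have split : ∀ x : ℝ, 0 < x → Real.log (2 * π * (N * x)) = Real.log (2 * π * N) + Real.log x :=
    fun x hx => by rw [← Real.log_mul (by positivity) hx.ne', mul_assoc (2 * π)]
  have split2 : ∀ x : ℝ, 0 < x →
      Real.log (2 * π * (N * x / 2)) = Real.log (π * N) + Real.log x :=
    fun x hx => by
      rw [← Real.log_mul (by positivity) hx.ne']
      congr 1
      ring
  rw [split m p0] at b1 b2
  rw [split2 (1 - m) p1] at c1 c2
  have l1 := abs_le.mp (abs_log_sub_log_le hε hm0 (by linarith : ε ≤ m₀))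
  have l2 := abs_le.mp (abs_log_sub_log_le hε hm1 (by linarith : ε ≤ 1 - m₀))
  rw [show 1 - m - (1 - m₀) = -(m - m₀) by ring, abs_neg] at l2
  have hε2 : ε ≤ 1 / 2 := by linarith
  have r0 : 0 ≤ 1 / ε / (N:ℝ) := by positivity
  have r1 : 1 / (12 * (N:ℝ)) ≤ 1 / ε / N / 12 := by
    rw [div_div, div_div]
    refine one_div_le_one_div_of_le (by positivity) ?_
    nlinarith
  have r2 : 1 / (12 * (N * m)) ≤ 1 / ε / N / 12 := by
    rw [div_div, div_div]
    refine one_div_le_one_div_of_le (by positivity) ?_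
    nlinarith [mul_le_mul_of_nonneg_left hm0 hN0.le]
  have r3 : 1 / (12 * (N * (1 - m) / 2)) ≤ 1 / ε / N / 6 := by
    rw [div_div, div_div]
    refine one_div_le_one_div_of_le (by positivity) ?_
    nlinarith [mul_le_mul_of_nonneg_left hm1 hN0.le]
  rw [log_dimerWeight J h hN hj hm, logNorm, split m₀ p2, split2 (1 - m₀) p3, abs_le]
  constructor <;> linarith [l1.1, l1.2, l2.1, l2.2]

lemma abs_cube_add_le (t : ℝ) : |t| ^ 3 + |t| + 1 ≤ 3 * (1 + t ^ 2) ^ 2 := by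
  rw [← sq_abs t]
  have := abs_nonneg t
  nlinarith [sq_nonneg (|t| - 1), sq_nonneg (|t| ^ 2 - |t|), sq_nonneg (|t| ^ 2)]

lemma mul_exp_neg_le {b x : ℝ} (hb : 0 < b) (hx : 1 ≤ x) :
    x * Real.exp (-b * x) ≤ 4 / b ^ 2 / √x := by
  have hx0 : 0 < x := by linarith
  have h1 : b / 2 * x ≤ Real.exp (b / 2 * x) := by
    linarith [Real.add_one_le_exp (b / 2 * x)]
  have h2 := pow_le_pow_left₀ (by positivity) h1 2
  rw [← Real.exp_nat_mul, show ((2:ℕ):ℝ) * (b / 2 * x) = b * x by push_cast; ring] at h2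
  have h3 : Real.exp (b * x) * Real.exp (-b * x) = 1 := by
    rw [← Real.exp_add]
    simp
  have h4 : (b / 2 * x) ^ 2 * Real.exp (-b * x) ≤ 1 := by
    rw [← h3]
    gcongr
  rw [div_div, le_div_iff₀ (by positivity)]
  have h5 : √x ≤ x := Real.sqrt_le_self_iff.mpr (Or.inr hx)
  have h6 : 0 ≤ b ^ 2 * x * Real.exp (-b * x) := by positivity
  linarith [mul_le_mul_of_nonneg_left h5 h6]

set_option maxHeartbeats 1000000 in
/-- The normalized weights are Gaussian up to a relative error of order `N ^ (-1/2)`. -/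
lemma exists_abs_dimerWeight_sub_le {J h m₀ : ℝ}
    (hmax : ∀ m ∈ Set.Icc (0:ℝ) 1, ptilde J h m ≤ ptilde J h m₀)
    (huniq : ∀ m ∈ Set.Icc (0:ℝ) 1, ptilde J h m = ptilde J h m₀ → m = m₀)
    (hfix : m₀ = gFun (tauFun J h m₀)) (hq : 0 < 1 / m₀ + 1 / (2 * (1 - m₀)) - 2 * J) :
    ∃ C c : ℝ, 0 ≤ C ∧ 0 < c ∧ ∀ N j : ℕ, 1 ≤ N → 2 * j ≤ N → ∀ t : ℝ,
      t * √N = 2 * j - N * (1 - m₀) →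
      |dimerWeight N J h j / Real.exp (logNorm N J h m₀)
        - Real.exp (-((1 / m₀ + 1 / (2 * (1 - m₀)) - 2 * J) / 2) * t ^ 2)|
      ≤ C / √N * Real.exp (-c * t ^ 2) := by
  obtain ⟨c', hc'0, hc'⟩ := exists_rateFun_le hmax huniq hfix hq
  set q := 1 / m₀ + 1 / (2 * (1 - m₀)) - 2 * J with hqdef
  have hm0 : 0 < m₀ := hfix ▸ gFun_pos _
  have hm1 : m₀ < 1 := by
    have := gFun_lt_one (tauFun J h m₀)
    rwa [← hfix] at this
  set ε := min (m₀ / 2) ((1 - m₀) / 2) with hεdef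
  have hε : 0 < ε := lt_min (by linarith) (by linarith)
  have hε0 : 2 * ε ≤ m₀ := by
    have := min_le_left (m₀ / 2) ((1 - m₀) / 2)
    linarith
  have hε1 : 2 * ε ≤ 1 - m₀ := by
    have := min_le_right (m₀ / 2) ((1 - m₀) / 2)
    linarith
  clear_value ε q
  set c := min c' (q / 2) with hcdef
  have hc : 0 < c := lt_min hc'0 (by positivity)
  have hcq : c ≤ q / 2 := min_le_right _ _
  have hcc : c ≤ c' := min_le_left _ _
  clear_value c
  set b := c * ε ^ 2 / 2 with hb
  have hb0 : 0 < b := by positivity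
  set C₁ := Real.exp (2 / ε) * (1 / ε ^ 2 * (3 * (1 + 1 / (c / 4)) ^ 2)) with hC₁
  set C₂ := 4 / b ^ 2 * Real.exp (1 + Real.log (2 * π)) with hC₂
  have hC₁0 : 0 ≤ C₁ := by positivity
  have hC₂0 : 0 ≤ C₂ := by positivity
  refine ⟨C₁ + C₂, c / 2, by positivity, by positivity, fun N j hN hj t ht => ?_⟩
  have hN0 : (0:ℝ) < N := by exact_mod_cast hN
  have hN1 : (1:ℝ) ≤ N := by exact_mod_cast hN
  set s := √(N:ℝ) with hs
  have hs0 : 0 < s := Real.sqrt_pos.mpr hN0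
  have hs1 : 1 ≤ s := Real.one_le_sqrt.mpr hN1
  have hsN : s ^ 2 = N := Real.sq_sqrt hN0.le
  have hk : ((N - 2 * j : ℕ) : ℝ) = N - 2 * j := by
    push_cast [Nat.cast_sub hj]
    ring
  set m := ((N - 2 * j : ℕ) : ℝ) / N with hmdef
  have hm : N * m = (N - 2 * j : ℕ) := by rw [hmdef]; field_simp
  have hmt : (m - m₀) * s = -t := by
    have h1 : (m - m₀) * s * s = -t * s := by
      rw [mul_assoc, ← sq, hsN, neg_mul, ht]
      rw [hk] at hm
      linarith
    exact mul_right_cancel₀ hs0.ne' h1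
  have hmabs : |m - m₀| * s = |t| := by
    rw [← abs_neg t, ← hmt, abs_mul, abs_of_pos hs0]
  have ht2 : N * (m - m₀) ^ 2 = t ^ 2 := by
    rw [← hsN, ← mul_pow, mul_comm, hmt]
    ring
  have hmIcc : m ∈ Set.Icc (0:ℝ) 1 := by
    refine ⟨by positivity, ?_⟩
    rw [hmdef, div_le_one hN0]
    exact_mod_cast Nat.sub_le _ _
  have hrate : N * (rateFun J h m - rateFun J h m₀) ≤ -c * t ^ 2 := by
    have h1 := hc' m hmIcc
    have h2 := mul_le_mul_of_nonneg_left h1 hN0.le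
    have h3 := mul_le_mul_of_nonneg_right hcc (sq_nonneg t)
    rw [← ht2] at h3 ⊢
    linarith
  have hφ : Real.exp (-(q / 2) * t ^ 2) ≤ Real.exp (-c * t ^ 2) := by gcongr
  set u := Real.log (dimerWeight N J h j) - logNorm N J h m₀ with hu
  have hw : dimerWeight N J h j / Real.exp (logNorm N J h m₀) = Real.exp u := by
    rw [hu, Real.exp_sub, Real.exp_log (dimerWeight_pos N J h j)]
  rw [hw]
  rcases le_or_gt |m - m₀| ε with hmε | hmε
  · have hbulk := abs_log_dimerWeight_sub_le J h hN hj hm hε hε0 hε1 hmε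
    rw [← hu] at hbulk
    have hexp := abs_rateFun_sub_le hε hε0 hε1 hfix hmε
    rw [← hqdef] at hexp
    have hε12 : 1 / ε ≤ 1 / ε ^ 2 := by
      refine one_div_le_one_div_of_le (by positivity) ?_
      nlinarith
    have hmle : |m - m₀| = |t| / s := by rw [← hmabs]; field_simp
    have hNs : 1 / ε / (N:ℝ) ≤ 1 / ε ^ 2 / s := by
      refine div_le_div₀ (by positivity) hε12 hs0 ?_
      nlinarith
    have hu1 : Real.exp u ≤ Real.exp (2 / ε) * Real.exp (-c * t ^ 2) := by
      rw [← Real.exp_add]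
      refine Real.exp_le_exp.mpr ?_
      have h1 := (abs_le.mp hbulk).2
      have h2 : 1 / ε * |m - m₀| ≤ 1 := by
        rw [one_div, inv_mul_le_iff₀ hε]
        linarith
      have h3 : 1 / ε / (N:ℝ) ≤ 1 / ε := div_le_self (by positivity) hN1
      have h4 : 1 ≤ 1 / ε := by
        rw [le_div_iff₀ hε]
        linarith
      have h5 : 2 / ε = 1 / ε + 1 / ε := by ring
      linarith
    have hv1 : Real.exp (-(q / 2) * t ^ 2) ≤ Real.exp (2 / ε) * Real.exp (-c * t ^ 2) := by
      refine hφ.trans (le_mul_of_one_le_left (Real.exp_pos _).le ?_)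
      exact Real.one_le_exp (by positivity)
    refine (abs_exp_sub_exp_le hu1 hv1).trans ?_
    have hdiff : |u - -(q / 2) * t ^ 2| ≤ 1 / ε ^ 2 / s * (3 * (1 + t ^ 2) ^ 2) := by
      have h1 : |u - -(q / 2) * t ^ 2| ≤ |u - N * (rateFun J h m - rateFun J h m₀)|
          + |N * (rateFun J h m - rateFun J h m₀ + q * (m - m₀) ^ 2 / 2)| := by
        refine le_trans (le_of_eq ?_) (abs_add_le _ _)
        congr 1
        rw [← ht2]
        ring
      have h2 : |N * (rateFun J h m - rateFun J h m₀ + q * (m - m₀) ^ 2 / 2)|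
          ≤ 1 / ε ^ 2 / s * |t| ^ 3 := by
        rw [abs_mul, abs_of_pos hN0]
        refine (mul_le_mul_of_nonneg_left hexp hN0.le).trans (le_of_eq ?_)
        rw [hmle, ← hsN]
        field_simp
      have h3 : 1 / ε * |m - m₀| ≤ 1 / ε ^ 2 / s * |t| := by
        rw [hmle]
        refine (mul_le_mul_of_nonneg_right hε12 (by positivity)).trans (le_of_eq ?_)
        ring
      have h5 := mul_le_mul_of_nonneg_left (abs_cube_add_le t) (by positivity : 0 ≤ 1 / ε ^ 2 / s)
      linarith
    have hpoly : (1 + t ^ 2) ^ 2 ≤ (1 + 1 / (c / 4)) ^ 2 * Real.exp (c / 2 * t ^ 2) := by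
      have h1 := add_sq_le_exp (b := c / 4) (x := t) (K := 1) (by positivity) (by norm_num)
      have h2 := pow_le_pow_left₀ (by positivity) h1 2
      refine h2.trans (le_of_eq ?_)
      rw [mul_pow, ← Real.exp_nat_mul]
      congr 2
      push_cast
      ring
    have hee : Real.exp (-c * t ^ 2) * Real.exp (c / 2 * t ^ 2) = Real.exp (-(c / 2) * t ^ 2) := by
      rw [← Real.exp_add]
      congr 1
      ring
    calc Real.exp (2 / ε) * Real.exp (-c * t ^ 2) * |u - -(q / 2) * t ^ 2|
        ≤ Real.exp (2 / ε) * Real.exp (-c * t ^ 2) * (1 / ε ^ 2 / s *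
          (3 * ((1 + 1 / (c / 4)) ^ 2 * Real.exp (c / 2 * t ^ 2)))) := by
          gcongr
          exact hdiff.trans (by gcongr)
      _ = C₁ / s * (Real.exp (-c * t ^ 2) * Real.exp (c / 2 * t ^ 2)) := by
          rw [hC₁]
          ring
      _ = C₁ / s * Real.exp (-(c / 2) * t ^ 2) := by rw [hee]
      _ ≤ (C₁ + C₂) / s * Real.exp (-(c / 2) * t ^ 2) := by
          gcongr
          linarith
  · have hcrude := log_dimerWeight_le J h hN hj hm hm0 hm1
    rw [← hu] at hcrude
    have hK0 : 0 ≤ 1 + Real.log (2 * π) := by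
      have := Real.log_nonneg (x := 2 * π) (by linarith [pi_gt_three])
      linarith
    set K := Real.exp (1 + Real.log (2 * π)) with hK
    have hK1 : 1 ≤ K := Real.one_le_exp hK0
    have hu1 : Real.exp u ≤ N * K * Real.exp (-c * t ^ 2) := by
      calc Real.exp u ≤ Real.exp (-c * t ^ 2 + Real.log N + (1 + Real.log (2 * π))) :=
            Real.exp_le_exp.mpr (by linarith)
        _ = _ := by
            rw [Real.exp_add, Real.exp_add, Real.exp_log hN0]
            ring
    have hv1 : Real.exp (-(q / 2) * t ^ 2) ≤ N * K * Real.exp (-c * t ^ 2) :=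
      hφ.trans (le_mul_of_one_le_left (Real.exp_pos _).le (by nlinarith))
    have hmaxb : |Real.exp u - Real.exp (-(q / 2) * t ^ 2)| ≤ N * K * Real.exp (-c * t ^ 2) := by
      rw [abs_le]
      constructor <;> linarith [Real.exp_pos u, Real.exp_pos (-(q / 2) * t ^ 2)]
    have htN : ε ^ 2 * N ≤ t ^ 2 := by
      rw [← ht2, ← sq_abs (m - m₀), mul_comm]
      gcongr
    have hee : Real.exp (-c * t ^ 2) ≤ Real.exp (-b * N) * Real.exp (-(c / 2) * t ^ 2) := by
      rw [← Real.exp_add]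
      refine Real.exp_le_exp.mpr ?_
      rw [hb]
      nlinarith [mul_le_mul_of_nonneg_left htN hc.le]
    have hNb := mul_exp_neg_le hb0 hN1
    rw [← hs] at hNb
    calc |Real.exp u - Real.exp (-(q / 2) * t ^ 2)| ≤ N * K * Real.exp (-c * t ^ 2) := hmaxb
      _ ≤ N * K * (Real.exp (-b * N) * Real.exp (-(c / 2) * t ^ 2)) := by gcongr
      _ = N * Real.exp (-b * N) * K * Real.exp (-(c / 2) * t ^ 2) := by ring
      _ ≤ 4 / b ^ 2 / s * K * Real.exp (-(c / 2) * t ^ 2) := by gcongr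
      _ = C₂ / s * Real.exp (-(c / 2) * t ^ 2) := by
          rw [hC₂]
          ring
      _ ≤ (C₁ + C₂) / s * Real.exp (-(c / 2) * t ^ 2) := by
          gcongr
          linarith

/-- The Gaussian distribution function in terms of the unnormalized Gaussian integral. -/
lemma gaussCDF_eq {a : ℝ} (ha : 0 < a) (z : ℝ) :
    gaussCDF ((2 * a)⁻¹) z
      = 1 - (∫ x in Set.Iic (-z), Real.exp (-a * x ^ 2)) / √(π / a) := by
  have hv0 : 0 < (2 * a)⁻¹ := by positivity
  have hv : Real.toNNReal ((2 * a)⁻¹) ≠ 0 := by simpa using ha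
  have hi := integrable_exp_neg_mul_sq ha
  have hG : 0 < √(π / a) := by positivity
  have hpdf : ProbabilityTheory.gaussianPDFReal 0 (Real.toNNReal ((2 * a)⁻¹))
      = fun x => (√(π / a))⁻¹ * Real.exp (-a * x ^ 2) := by
    funext x
    rw [ProbabilityTheory.gaussianPDFReal_def]
    simp only [Real.coe_toNNReal _ hv0.le, sub_zero]
    rw [show 2 * π * (2 * a)⁻¹ = π / a by field_simp,
      show -x ^ 2 / (2 * (2 * a)⁻¹) = -a * x ^ 2 by field_simp]
  have hrefl : ∫ x in Set.Iic (-z), Real.exp (-a * x ^ 2)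
      = ∫ x in Set.Ioi z, Real.exp (-a * x ^ 2) := by
    have := integral_comp_neg_Iic (-z) (fun x => Real.exp (-a * x ^ 2))
    simpa using this
  have hsplit := integral_add_compl (measurableSet_Iic (a := z)) hi
  rw [Set.compl_Iic, integral_gaussian] at hsplit
  rw [gaussCDF, ProbabilityTheory.gaussianReal_apply_eq_integral _ hv,
    ENNReal.toReal_ofReal (integral_nonneg fun x =>
      ProbabilityTheory.gaussianPDFReal_nonneg _ _ x), hpdf, integral_const_mul, hrefl,
    eq_sub_iff_add_eq, inv_mul_eq_div, ← add_div, hsplit, div_self hG.ne']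

/-- The distribution function of the rescaled number of monomers in terms of the weights. -/
lemma probDim_eq {N : ℕ} (hN : 1 ≤ N) (J h m₀ z : ℝ) :
    probDim N J h (fun D => (((monomers D).card : ℝ) - N * m₀) / √N ≤ z)
      = 1 - (∑ j ∈ (range (N / 2 + 1)).filter
            (fun j : ℕ => -(1 - m₀) * √N + j * (2 / √N) < -z), dimerWeight N J h j)
          / ∑ j ∈ range (N / 2 + 1), dimerWeight N J h j := by
  have hN0 : (0:ℝ) < N := by exact_mod_cast hN
  have hs0 : 0 < √(N:ℝ) := Real.sqrt_pos.mpr hN0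
  have hsN : √(N:ℝ) * √N = N := Real.mul_self_sqrt hN0.le
  have hden : ∑ D : Dimer N, wDim N J h D = ∑ j ∈ range (N / 2 + 1), dimerWeight N J h j :=
    sum_dimer_eq N fun k => Real.exp (N * (J * ((k:ℝ) / N) ^ 2 + bIMD N J h * ((k:ℝ) / N)))
  have hnum : ∑ D : Dimer N, Set.indicator
        {D | (((monomers D).card : ℝ) - N * m₀) / √N ≤ z} (wDim N J h) D
      = ∑ j ∈ (range (N / 2 + 1)).filter
            (fun j : ℕ => ¬ -(1 - m₀) * √N + j * (2 / √N) < -z), dimerWeight N J h j := by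
    have hsum := sum_dimer_eq N fun k => if ((k:ℝ) - N * m₀) / √N ≤ z then
      Real.exp (N * (J * ((k:ℝ) / N) ^ 2 + bIMD N J h * ((k:ℝ) / N))) else 0
    refine Eq.trans (Finset.sum_congr rfl fun D _ => ?_) (hsum.trans ?_)
    · simp only [Set.indicator_apply, Set.mem_ofPred_eq, wDim, mDim]
    · rw [Finset.sum_filter]
      refine Finset.sum_congr rfl fun j hj => ?_
      have hj' : 2 * j ≤ N := by
        have := Finset.mem_range.mp hj
        omega
      have hk : ((N - 2 * j : ℕ) : ℝ) = N - 2 * j := by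
        push_cast [Nat.cast_sub hj']
        ring
      have hiff : (((N - 2 * j : ℕ) : ℝ) - N * m₀) / √N ≤ z ↔
          ¬ -(1 - m₀) * √N + j * (2 / √N) < -z := by
        have heq : (((N - 2 * j : ℕ) : ℝ) - N * m₀) / √N
            = -(-(1 - m₀) * √N + j * (2 / √N)) := by
          rw [hk, div_eq_iff hs0.ne']
          have : (j:ℝ) * (2 / √N) * √N = 2 * j := by field_simp
          linear_combination (-(1 - m₀)) * hsN + this
        rw [heq, not_lt, neg_le]
      by_cases hc : (((N - 2 * j : ℕ) : ℝ) - N * m₀) / √N ≤ z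
      · rw [if_pos hc, if_pos (hiff.mp hc), dimerWeight]
      · rw [if_neg hc, if_neg (fun h' => hc (hiff.mpr h')), mul_zero]
  have hpos : 0 < ∑ j ∈ range (N / 2 + 1), dimerWeight N J h j :=
    Finset.sum_pos (fun j _ => dimerWeight_pos N J h j) ⟨0, by simp⟩
  rw [probDim, hnum, hden, eq_sub_iff_add_eq, ← add_div, add_comm,
    Finset.sum_filter_add_sum_filter_not, div_self hpos.ne']

/-- Bounds on truncated quantities that are uniform in the truncation pass to the total. -/
lemma abs_sub_integral_gaussian_le {a B A M : ℝ} (ha : 0 < a)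
    (hA : ∀ y, M ≤ y → |A - ∫ x in Set.Iic y, Real.exp (-a * x ^ 2)| ≤ B) :
    |A - √(π / a)| ≤ B := by
  have hlim : Filter.Tendsto (fun y : ℝ => ∫ x in Set.Iic y, Real.exp (-a * x ^ 2))
      Filter.atTop (nhds (√(π / a))) := by
    rw [← integral_gaussian]
    exact (aecover_Iic Filter.tendsto_id).integral_tendsto_of_countably_generated
      (integrable_exp_neg_mul_sq ha)
  refine le_of_tendsto (hlim.const_sub A).abs ?_
  filter_upwards [Filter.eventually_ge_atTop M] with y hy using hA y hy

lemma abs_div_sub_div_le {x X y Y e : ℝ} (hx : 0 ≤ x) (hxX : x ≤ X) (hX : 0 < X) (hY : 0 < Y)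
    (h1 : |x - y| ≤ e) (h2 : |X - Y| ≤ e) : |x / X - y / Y| ≤ 2 * e / Y := by
  have heq : x / X - y / Y = (x / X * (Y - X) + (x - y)) / Y := by
    field_simp
    ring
  rw [heq, abs_div, abs_of_pos hY]
  gcongr
  refine (abs_add_le _ _).trans ?_
  rw [abs_mul, abs_sub_comm Y X, abs_of_nonneg (by positivity)]
  have h3 : x / X ≤ 1 := (div_le_one hX).mpr hxX
  have h4 : x / X * |X - Y| ≤ 1 * |X - Y| := by gcongr
  linarith

/-- Berry–Esseen bound in terms of the curvature of the rate function at the maximizer. -/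
lemma exists_abs_probDim_sub_gaussCDF_le {J h m₀ : ℝ}
    (hmax : ∀ m ∈ Set.Icc (0:ℝ) 1, ptilde J h m ≤ ptilde J h m₀)
    (huniq : ∀ m ∈ Set.Icc (0:ℝ) 1, ptilde J h m = ptilde J h m₀ → m = m₀)
    (hfix : m₀ = gFun (tauFun J h m₀)) (hq : 0 < 1 / m₀ + 1 / (2 * (1 - m₀)) - 2 * J) :
    ∃ K : ℝ, ∀ N : ℕ, 1 ≤ N → ∀ z : ℝ,
      |probDim N J h (fun D => (((monomers D).card : ℝ) - N * m₀) / √N ≤ z)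
        - gaussCDF (1 / m₀ + 1 / (2 * (1 - m₀)) - 2 * J)⁻¹ z| ≤ K / √N := by
  obtain ⟨C, c, hC0, hc, hw⟩ := exists_abs_dimerWeight_sub_le hmax huniq hfix hq
  have hm0 : 0 < m₀ := hfix ▸ gFun_pos _
  have hm1 : m₀ < 1 := by
    have := gFun_lt_one (tauFun J h m₀)
    rwa [← hfix] at this
  set q := 1 / m₀ + 1 / (2 * (1 - m₀)) - 2 * J with hqdef
  clear_value q
  have ha : 0 < q / 2 := by positivity
  have hη : 0 < min m₀ (1 - m₀) := lt_min hm0 (by linarith)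
  obtain ⟨R, hR0, hR⟩ := exists_abs_sum_sub_integral_gaussian_le ha hc (mul_pos two_pos hη)
  have hG : 0 < √(π / (q / 2)) := by positivity
  refine ⟨2 * (R * (C + 2)) / √(π / (q / 2)), fun N hN z => ?_⟩
  have hN0 : (0:ℝ) < N := by exact_mod_cast hN
  have hN1 : (1:ℝ) ≤ N := by exact_mod_cast hN
  have hs0 : 0 < √(N:ℝ) := Real.sqrt_pos.mpr hN0
  have hs1 : 1 ≤ √(N:ℝ) := Real.one_le_sqrt.mpr hN1
  have hsN : √(N:ℝ) * √N = N := Real.mul_self_sqrt hN0.le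
  set Z := Real.exp (logNorm N J h m₀) with hZ
  have hZ0 : 0 < Z := Real.exp_pos _
  have hgrid : min m₀ (1 - m₀) * 2 / (2 / √(N:ℝ)) = min m₀ (1 - m₀) * √N := by field_simp
  have hδ2 : 2 / √(N:ℝ) ≤ 2 := div_le_self (by norm_num) hs1
  have hleft : -(1 - m₀) * √N ≤ -(2 * min m₀ (1 - m₀) / (2 / √(N:ℝ))) := by
    rw [mul_comm 2, hgrid, neg_mul, neg_le_neg_iff]
    gcongr
    exact min_le_right _ _
  have hright : 2 * min m₀ (1 - m₀) / (2 / √(N:ℝ))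
      ≤ -(1 - m₀) * √N + ((N / 2 : ℕ) + 1) * (2 / √N) := by
    rw [mul_comm 2, hgrid]
    have h1 : (N:ℝ) ≤ 2 * ((N / 2 : ℕ) + 1) := by
      have : N ≤ 2 * (N / 2 + 1) := by omega
      exact_mod_cast this
    have h2 : √(N:ℝ) ≤ ((N / 2 : ℕ) + 1) * (2 / √N) := by
      rw [← mul_div_assoc, le_div_iff₀ hs0, hsN]
      linarith
    have h3 : min m₀ (1 - m₀) * √N ≤ m₀ * √N := by
      gcongr
      exact min_le_left _ _
    linarith
  have hbound := hR (2 / √N) (by positivity) hδ2 (C / √N) (by positivity) (-(1 - m₀) * √N) (N / 2)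
    (fun j => dimerWeight N J h j / Z) hleft hright (fun j hj => hw N j hN (by omega) _ (by
      have : (j:ℝ) * (2 / √N) * √N = 2 * j := by field_simp
      linear_combination (-(1 - m₀)) * hsN + this))
  have hE : R * (C / √N + 2 / √N) = R * (C + 2) / √N := by ring
  rw [hE] at hbound
  have hsumZ : ∀ s : Finset ℕ, 2 / √(N:ℝ) * ∑ j ∈ s, dimerWeight N J h j / Z
      = 2 / √N / Z * ∑ j ∈ s, dimerWeight N J h j := by
    intro s
    rw [← Finset.sum_div]
    ring
  have hκ : 0 < 2 / √(N:ℝ) / Z := by positivity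
  simp only [hsumZ] at hbound
  set S := ∑ j ∈ range (N / 2 + 1), dimerWeight N J h j with hS
  have hS0 : 0 < S := Finset.sum_pos (fun j _ => dimerWeight_pos N J h j) ⟨0, by simp⟩
  have htotal : |2 / √(N:ℝ) / Z * S - √(π / (q / 2))| ≤ R * (C + 2) / √N := by
    refine abs_sub_integral_gaussian_le (M := -(1 - m₀) * √N + (N + 1) * (2 / √N)) ha
      fun y hy => ?_
    have := hbound y
    rwa [Finset.filter_true_of_mem] at this
    intro j hj
    refine lt_of_lt_of_le ?_ hy
    have : (j:ℝ) < N + 1 := by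
      have := Finset.mem_range.mp hj
      have : j < N + 1 := by omega
      exact_mod_cast this
    gcongr
  have hq2 : q⁻¹ = (2 * (q / 2))⁻¹ := by ring_nf
  rw [probDim_eq hN, hq2, gaussCDF_eq ha, sub_sub_sub_cancel_left, abs_sub_comm,
    ← mul_div_mul_left _ _ hκ.ne']
  have hle : 2 / √(N:ℝ) / Z * ∑ j ∈ (range (N / 2 + 1)).filter
      (fun j : ℕ => -(1 - m₀) * √N + j * (2 / √N) < -z), dimerWeight N J h j
      ≤ 2 / √N / Z * S := by
    gcongr
    exact Finset.sum_le_sum_of_subset_of_nonneg (Finset.filter_subset _ _)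
      fun j _ _ => (dimerWeight_pos N J h j).le
  refine (abs_div_sub_div_le
    (mul_nonneg hκ.le (Finset.sum_nonneg fun j _ => (dimerWeight_pos N J h j).le))
    hle (mul_pos hκ hS0) hG (hbound (-z)) htotal).trans (le_of_eq ?_)
  ring

/-- CLT with Berry–Esseen rate for the monomer density away from
criticality: if `m₀` is the unique maximizer of `𝑝̃` on `[0,1]`, satisfies the
fixed-point equation and `𝑝̃''(m₀) < 0`, then `λ = -1/𝑝̃''(m₀) - 1/(2J) > 0` and the
Kolmogorov distance between `(|𝓜(D)| - N m₀)/√N` and `N(0, λ)` is at most `K/√N`. -/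
theorem stmt0 (J h : ℝ) (hJ : 0 ≤ J) (m₀ : ℝ) (hm₀ : m₀ ∈ Set.Icc (0:ℝ) 1)
    (hmax : ∀ m ∈ Set.Icc (0:ℝ) 1, ptilde J h m ≤ ptilde J h m₀)
    (huniq : ∀ m ∈ Set.Icc (0:ℝ) 1, ptilde J h m = ptilde J h m₀ → m = m₀)
    (hfix : m₀ = gFun (tauFun J h m₀))
    (hconc : iteratedDeriv 2 (ptilde J h) m₀ < 0) :
    0 < -(iteratedDeriv 2 (ptilde J h) m₀)⁻¹ - (2*J)⁻¹ ∧
    ∃ K : ℝ, ∀ N : ℕ, 1 ≤ N → ∀ z : ℝ,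
      |probDim N J h
          (fun D => (((monomers D).card : ℝ) - N * m₀) / Real.sqrt N ≤ z)
        - gaussCDF (-(iteratedDeriv 2 (ptilde J h) m₀)⁻¹ - (2*J)⁻¹) z|
      ≤ K / Real.sqrt N := by
  have hJ0 : 0 < J := by
    refine lt_of_le_of_ne hJ fun h0 => ?_
    rw [iteratedDeriv_two_ptilde, ← h0] at hconc
    simp at hconc
  obtain ⟨hq, hlam⟩ := variance_eq hJ0 hfix hconc
  rw [hlam]
  exact ⟨inv_pos.mpr hq, exists_abs_probDim_sub_gaussCDF_le hmax huniq hfix hq⟩
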